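/- Let A ⊂ ℝ² be a Borel set with dim A > 0. Then the set {x ∈ ℝ² : dim π_x(A \ {x}) < (dim A)/2}, where π_x : ℝ² \ {x} → S¹ is the radial projection π_x(y) = (y − x)/|y − x|, either has Hausdorff dimension 0 or is contained in an affine line. -/

import Mathlib

/-!
Write `E` for the exceptional set and `π_x` for the radial projection from `x`.

Let `dim A / 2 < s < dim A`. Frostman's lemma gives a compact `K ⊆ A` and a probability measure
`μ` on `K` with `μ (B(x, r)) ≤ C r ^ s`. There are two cases.

*Some line `ℓ` has positive `μ`-measure.* For `x ∉ ℓ` the map `π_x` is bi-Lipschitz on the bounded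
set `K ∩ ℓ`, so `dim π_x (A \ {x}) ≥ s > dim A / 2`. Hence `E ⊆ ℓ` (`line_case`).

*Every line is `μ`-null.* By countable stability of the dimension it is enough to show that
`E_t = {x | dim π_x (A \ {x}) < t}` has dimension `0` for each `t` in a sequence increasing to
`dim A / 2`, and `s` may be chosen with `2 t < s` (`dimH_exceptional_eq_zero`). If `dim E_t > 0`,
there is a probability measure `ν` with `ν (B(x, r)) ≤ C r ^ u`, `u > 0`, on a compact set of points
`x` all of which have `t`-null projection of a fixed compact `Y ⊆ K` disjoint from the support of
`ν`. To apply Frostman's lemma one needs a Borel set of centres; nullity of `π_x (Y)` is expressed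
by open covers, which makes it a `G_δ` condition in `x` (`measurableSet_null`).

The contradiction comes from finding one `x` in the support of `ν` and a set `G ⊆ Y` of positive
`μ`-measure such that every tube through `x` and a point of `G` of width `d` meets `G` in measure
`≤ d ^ t` for small `d` (`exists_thin_fibre`): the mass distribution principle then says that
`π_x (G)` is not `t`-null (`not_null`). This is obtained from a set of pairs `(x, y)` by successively
removing those for which the tube of width `δ` through `x` and `y` is too heavy, i.e. has measure
`≥ τ = δ ^ t₁` with `t < t₁ < s / 2`. The measure of the removed set is estimated by
Cauchy–Schwarz: its square is at most the `ν × ν × μ`-measure of the triples `(x, x', y)` for which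
both `(x, y)` and `(x', y)` are heavy. Either `x` and `x'` are close, which is rare by the Frostman
condition on `ν`; or `y` is near the line through `x` and `x'`, which is rare since tubes of a larger
width `e` are already known to be light; or the two `δ`-tubes meet transversally, in a set of
diameter about `δ / e ^ 2` and hence of measure at most about `(δ / e ^ 2) ^ s`, so that such `y`
have measure `≲ (δ / e ^ 2) ^ s / τ ^ 2` (`measure_transversal_le`, `measure_heavy_sq_le`). Since
`2 t₁ < s`, this is small when `δ` is a sufficiently large power of `e`. Along the scales
`e_{j + 1} = e_j ^ β`, with `β = t₁ / t`, the losses are summable. The induction starts because tubes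
of small width are uniformly light, by compactness and the assumption on lines (`exists_base`).

Widths of tubes are measured by the determinant `det x y z`, which for `y` and `z` in
an annulus around `x` is comparable to the distance from `z` to the line through `x` and `y`.

Frostman's lemma itself is proved with the dyadic content: it is continuous along increasing
sequences of arbitrary sets (`content_iUnion_le_of_monotone`), which gives compact sets inside
analytic sets (`exists_compact_of_analytic`) and, with the usual truncation from fine to coarse
dyadic squares and a weak limit, the measure.
-/

open MeasureTheory
open scoped ENNReal

namespace Orponen
open MeasureTheory Set Filter Topology Metric
open scoped ENNReal NNReal

/-! ### Dyadic content -/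

/-- The Euclidean plane. -/
abbrev Plane := EuclideanSpace ℝ (Fin 2)

/-- The index of the half-open dyadic square of side `2 ^ (-n)` containing `p`. -/
noncomputable def code (n : ℕ) (p : Plane) : ℤ × ℤ := (⌊2 ^ n * p 0⌋, ⌊2 ^ n * p 1⌋)

/-- An index `(n, a, b)` of a dyadic square: its level `n` and its integer position `(a, b)`. -/
abbrev CubeIdx := ℕ × ℤ × ℤ

/-- The half-open dyadic square `[a, a + 1) × [b, b + 1)`, scaled by `2 ^ (-n)`, for `Q = (n, a, b)`. -/
def cube (Q : CubeIdx) : Set Plane := {p | code Q.1 p = Q.2}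

/-- The weight `2 ^ (- n s)` of a dyadic square of level `n`. -/
noncomputable def wt (s : ℝ) (n : ℕ) : ℝ≥0∞ := ((2 : ℝ≥0∞)⁻¹ ^ n) ^ s

/-- The total weight of a family of dyadic squares. It is defined as a measure on the discrete space of
indices, so that the inclusion-exclusion formula for measures is available. -/
noncomputable def famWt (s : ℝ) : Measure CubeIdx :=
  Measure.count.withDensity fun Q => wt s Q.1

/-- The squares of the family `D` cover `A`. -/
def Covers (D : Set CubeIdx) (A : Set Plane) : Prop := ∀ p ∈ A, ∃ Q ∈ D, p ∈ cube Q

/-- The `s`-dimensional dyadic Hausdorff content: the infimum of the total weight over all families of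
dyadic squares of side at most `1` covering `A`. -/
noncomputable def content (s : ℝ) (A : Set Plane) : ℝ≥0∞ :=
  ⨅ (D : Set CubeIdx) (_ : Covers D A), famWt s D

lemma floor_half (n : ℕ) (x : ℝ) : ⌊(2:ℝ) ^ n * x⌋ = ⌊(2:ℝ) ^ (n + 1) * x⌋ / 2 := by
  have h := Int.natCast_mul_floor_div_cancel (n := 2) (by norm_num) ((2:ℝ) ^ n * x)
  rw [← h]
  push_cast
  ring_nf

lemma code_succ_eq {n : ℕ} {p q : Plane} (h : code (n + 1) p = code (n + 1) q) :
    code n p = code n q := by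
  simp only [code, Prod.mk.injEq] at h ⊢
  rw [floor_half, floor_half n (q 0), floor_half n (p 1), floor_half n (q 1), h.1, h.2]
  exact ⟨rfl, rfl⟩

lemma code_eq_of_le {m n : ℕ} (hmn : m ≤ n) {p q : Plane} (h : code n p = code n q) :
    code m p = code m q := by
  induction hmn with
  | refl => exact h
  | step _ ih => exact ih (code_succ_eq h)

lemma measurable_code (n : ℕ) : Measurable (code n) := by
  unfold code
  refine Measurable.prodMk ?_ ?_ <;>
  · apply Int.measurable_floor.comp
    fun_prop

lemma measurableSet_cube (Q : CubeIdx) : MeasurableSet (cube Q) :=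
  measurable_code Q.1 (measurableSet_singleton Q.2)

/-- Two dyadic squares with a common point are nested. -/
lemma cube_subset {Q Q' : CubeIdx} (hl : Q'.1 ≤ Q.1) {p : Plane} (hp : p ∈ cube Q)
    (hp' : p ∈ cube Q') : cube Q ⊆ cube Q' := by
  intro q hq
  have : code Q.1 q = code Q.1 p := by rw [show code Q.1 q = Q.2 from hq, show code Q.1 p = Q.2 from hp]
  exact (code_eq_of_le hl this).trans hp'

lemma cube_eq {Q Q' : CubeIdx} (hl : Q'.1 = Q.1) {p : Plane} (hp : p ∈ cube Q)
    (hp' : p ∈ cube Q') : Q = Q' := by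
  obtain ⟨n, a⟩ := Q
  obtain ⟨n', a'⟩ := Q'
  simp only at hl
  subst hl
  have h1 : code n' p = a := hp
  have h2 : code n' p = a' := hp'
  rw [← h1, ← h2]

lemma famWt_singleton (s : ℝ) (Q : CubeIdx) : famWt s {Q} = wt s Q.1 := by
  simp [famWt, withDensity_apply _ (MeasurableSet.singleton Q), Measure.restrict_singleton]

lemma famWt_eq_tsum (s : ℝ) (D : Set CubeIdx) : famWt s D = ∑' Q : D, wt s Q.1.1 := by
  rw [← Measure.tsum_indicator_apply_singleton (famWt s) D (MeasurableSet.of_discrete),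
    tsum_subtype D (fun Q => wt s Q.1)]
  congr 1
  ext Q
  simp only [famWt_singleton]

lemma wt_le_of_mem {s : ℝ} {D : Set CubeIdx} {Q : CubeIdx} (h : Q ∈ D) : wt s Q.1 ≤ famWt s D := by
  rw [← famWt_singleton]
  exact measure_mono (by simpa using h)

lemma wt_ne_zero (s : ℝ) (n : ℕ) : wt s n ≠ 0 := by
  unfold wt
  apply (ENNReal.rpow_pos _ _).ne'
  · exact ENNReal.pow_pos (by simp) n
  · exact ENNReal.pow_ne_top (by simp)

lemma wt_ne_top (s : ℝ) (n : ℕ) : wt s n ≠ ∞ := by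
  unfold wt
  apply ENNReal.rpow_ne_top_of_ne_zero
  · exact (ENNReal.pow_pos (by simp) n).ne'
  · exact ENNReal.pow_ne_top (by simp)

lemma content_le {s : ℝ} {D : Set CubeIdx} {A : Set Plane} (h : Covers D A) :
    content s A ≤ famWt s D := iInf₂_le D h

lemma content_mono (s : ℝ) {A B : Set Plane} (h : A ⊆ B) : content s A ≤ content s B :=
  le_iInf₂ fun _ hD => content_le fun p hp => hD p (h hp)

lemma content_le_wt (s : ℝ) {A : Set Plane} {Q : CubeIdx} (h : A ⊆ cube Q) :
    content s A ≤ wt s Q.1 := by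
  rw [← famWt_singleton]
  exact content_le fun p hp => ⟨Q, rfl, h hp⟩

lemma content_empty (s : ℝ) : content s ∅ = 0 := by
  apply le_antisymm _ zero_le
  rw [← measure_empty (μ := famWt s)]
  exact content_le fun p hp => hp.elim

lemma exists_cover {s : ℝ} {A : Set Plane} {a : ℝ≥0∞} (h : content s A < a) :
    ∃ D, Covers D A ∧ famWt s D < a := by
  unfold content at h
  simp only [iInf_lt_iff] at h
  obtain ⟨D, h1, h2⟩ := h
  exact ⟨D, h1, h2⟩

lemma content_iUnion_le {ι : Type*} [Countable ι] (s : ℝ) (A : ι → Set Plane) :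
    content s (⋃ i, A i) ≤ ∑' i, content s (A i) := by
  by_cases htop : ∑' i, content s (A i) = ∞
  · rw [htop]; exact le_top
  refine ENNReal.le_of_forall_pos_le_add fun ε hε _ => ?_
  obtain ⟨ε', hε', hsum⟩ := ENNReal.exists_pos_sum_of_countable' (ε := (ε : ℝ≥0∞))
    (by simpa using hε.ne') ι
  have hfin : ∀ i, content s (A i) ≠ ∞ := fun i => ne_top_of_le_ne_top htop (ENNReal.le_tsum i)
  have : ∀ i, ∃ D, Covers D (A i) ∧ famWt s D < content s (A i) + ε' i := fun i =>
    exists_cover (ENNReal.lt_add_right (hfin i) (hε' i).ne')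
  choose D hD hW using this
  calc content s (⋃ i, A i) ≤ famWt s (⋃ i, D i) := content_le fun p hp => by
        obtain ⟨i, hi⟩ := mem_iUnion.1 hp
        obtain ⟨Q, hQ, hpQ⟩ := hD i p hi
        exact ⟨Q, mem_iUnion.2 ⟨i, hQ⟩, hpQ⟩
    _ ≤ ∑' i, famWt s (D i) := measure_iUnion_le _
    _ ≤ ∑' i, (content s (A i) + ε' i) := ENNReal.tsum_le_tsum fun i => (hW i).le
    _ = ∑' i, content s (A i) + ∑' i, ε' i := ENNReal.tsum_add
    _ ≤ _ := by gcongr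

/-- The maximal squares of a family: those disjoint from every larger square of the family. -/
def maxFam (F : Set CubeIdx) : Set CubeIdx :=
  {Q | Q ∈ F ∧ ∀ Q' ∈ F, Q'.1 < Q.1 → Disjoint (cube Q) (cube Q')}

lemma exists_maxFam {F : Set CubeIdx} {Q : CubeIdx} (hQ : Q ∈ F) {p : Plane} (hp : p ∈ cube Q) :
    ∃ Q' ∈ maxFam F, p ∈ cube Q' ∧ Q'.1 ≤ Q.1 := by
  classical
  have hex : ∃ n, ∃ Q' ∈ F, p ∈ cube Q' ∧ Q'.1 = n := ⟨_, Q, hQ, hp, rfl⟩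
  obtain ⟨Q', hQ', hpQ', hn⟩ := Nat.find_spec hex
  refine ⟨Q', ⟨hQ', fun Q'' hQ'' hlt => ?_⟩, hpQ', ?_⟩
  · rw [Set.disjoint_left]
    intro q hq hq''
    have := cube_subset hlt.le hq hq'' hpQ'
    have hmin := Nat.find_min' hex ⟨Q'', hQ'', this, rfl⟩
    omega
  · rw [hn]; exact Nat.find_min' hex ⟨Q, hQ, hp, rfl⟩

lemma maxFam_subset (F : Set CubeIdx) : maxFam F ⊆ F := fun _ h => h.1

/-- Strong subadditivity of the dyadic content, on the level of families: discarding the non-maximal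
squares of `D ∪ E` leaves a cover, while the discarded squares together with `D ∩ E` still cover `A`,
since a point of `A` lies in a square of `D` and one of `E`, and these are nested. -/
lemma famWt_maxFam_add_content (s : ℝ) {D E : Set CubeIdx} {A : Set Plane} (hD : Covers D A)
    (hE : Covers E A) : famWt s (maxFam (D ∪ E)) + content s A ≤ famWt s D + famWt s E := by
  set L := ((D ∪ E) \ maxFam (D ∪ E)) ∪ (D ∩ E)
  have hL : Covers L A := by
    intro p hp
    obtain ⟨Q, hQ, hpQ⟩ := hD p hp
    obtain ⟨Q', hQ', hpQ'⟩ := hE p hp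
    rcases lt_trichotomy Q.1 Q'.1 with h | h | h
    · refine ⟨Q', Or.inl ⟨Or.inr hQ', fun hm => ?_⟩, hpQ'⟩
      exact Set.disjoint_left.1 (hm.2 Q (Or.inl hQ) h) hpQ' hpQ
    · have := cube_eq h hpQ' hpQ
      subst this
      exact ⟨Q', Or.inr ⟨hQ, hQ'⟩, hpQ⟩
    · refine ⟨Q, Or.inl ⟨Or.inl hQ, fun hm => ?_⟩, hpQ⟩
      exact Set.disjoint_left.1 (hm.2 Q' (Or.inr hQ') h) hpQ hpQ'
  calc famWt s (maxFam (D ∪ E)) + content s A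
      ≤ famWt s (maxFam (D ∪ E)) + (famWt s ((D ∪ E) \ maxFam (D ∪ E)) + famWt s (D ∩ E)) := by
        gcongr
        exact (content_le hL).trans (measure_union_le _ _)
    _ = famWt s (D ∪ E) + famWt s (D ∩ E) := by
        rw [← add_assoc]
        congr 1
        have := measure_inter_add_sdiff (μ := famWt s) (D ∪ E)
          (MeasurableSet.of_discrete (s := maxFam (D ∪ E)))
        rwa [inter_eq_self_of_subset_right (maxFam_subset _)] at this
    _ = famWt s D + famWt s E := measure_union_add_inter _ MeasurableSet.of_discrete

/-- Increasing sets lemma for the dyadic content. Near-optimal covers of the sets `A n` are merged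
successively, keeping only maximal squares; strong subadditivity keeps the total weight below
`L + ε`, and the square containing a given point stabilises because its level can only decrease. -/
lemma content_iUnion_le_of_monotone (s : ℝ) {A : ℕ → Set Plane} (hA : Monotone A) {L : ℝ≥0∞}
    (hL : ∀ n, content s (A n) ≤ L) : content s (⋃ n, A n) ≤ L := by
  by_cases htop : L = ∞
  · rw [htop]; exact le_top
  refine ENNReal.le_of_forall_pos_le_add fun ε hε _ => ?_
  obtain ⟨ε', hε', hsum⟩ := ENNReal.exists_pos_sum_of_countable' (ε := (ε : ℝ≥0∞))
    (by simpa using hε.ne') ℕ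
  have hfin : ∀ i, content s (A i) ≠ ∞ := fun i => ne_top_of_le_ne_top htop (hL i)
  have : ∀ i, ∃ D, Covers D (A i) ∧ famWt s D < content s (A i) + ε' i := fun i =>
    exists_cover (ENNReal.lt_add_right (hfin i) (hε' i).ne')
  choose D hD hW using this
  let T : ℕ → Set CubeIdx := fun n => Nat.rec (D 0) (fun k F => maxFam (F ∪ D (k + 1))) n
  have hTs : ∀ n, T (n + 1) = maxFam (T n ∪ D (n + 1)) := fun n => rfl
  have hpers : ∀ n p, (∃ Q ∈ T n, p ∈ cube Q) → ∃ Q ∈ T (n + 1), p ∈ cube Q := by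
    rintro n p ⟨Q, hQ, hp⟩
    obtain ⟨Q', h1, h2, -⟩ := exists_maxFam (F := T n ∪ D (n + 1)) (Or.inl hQ) hp
    exact ⟨Q', h1, h2⟩
  have hcov : ∀ n, Covers (T n) (A n) := by
    intro n
    cases n with
    | zero => exact hD 0
    | succ n =>
      intro p hp
      obtain ⟨Q, hQ, hpQ⟩ := hD (n + 1) p hp
      obtain ⟨Q', h1, h2, -⟩ := exists_maxFam (F := T n ∪ D (n + 1)) (Or.inr hQ) hpQ
      exact ⟨Q', h1, h2⟩
  have hWT : ∀ n, famWt s (T n) ≤ content s (A n) + ∑ i ∈ Finset.range (n + 1), ε' i := by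
    intro n
    induction n with
    | zero => rw [zero_add, Finset.sum_range_one]; exact (hW 0).le
    | succ n ih =>
      have h1 := famWt_maxFam_add_content s (hcov n)
        (fun p hp => hD (n + 1) p (hA (Nat.le_succ n) hp) : Covers (D (n + 1)) (A n))
      rw [← hTs] at h1
      have h2 : famWt s (T (n + 1)) + content s (A n) ≤
          (content s (A (n + 1)) + ∑ i ∈ Finset.range (n + 1 + 1), ε' i) + content s (A n) := by
        rw [Finset.sum_range_succ _ (n + 1)]
        calc _ ≤ _ := h1
          _ ≤ (content s (A n) + ∑ i ∈ Finset.range (n + 1), ε' i) +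
              (content s (A (n + 1)) + ε' (n + 1)) := add_le_add ih (hW (n + 1)).le
          _ = _ := by ring
      exact (ENNReal.add_le_add_iff_right (hfin n)).1 h2
  have hWT' : ∀ n, famWt s (T n) ≤ L + ε := fun n =>
    (hWT n).trans (add_le_add (hL n) ((ENNReal.sum_le_tsum _).trans hsum.le))
  -- the squares that are kept from stage `m` on
  let S : ℕ → Set CubeIdx := fun m => ⋂ n ≥ m, T n
  have hSmono : Monotone S := by
    intro m m' h
    exact biInter_subset_biInter_left fun n hn => le_trans h hn
  have hcovS : Covers (⋃ m, S m) (⋃ n, A n) := by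
    classical
    intro p hp
    obtain ⟨n₀, hn₀⟩ := mem_iUnion.1 hp
    let P : ℕ → Prop := fun l => ∃ m ≥ n₀, ∃ Q ∈ T m, p ∈ cube Q ∧ Q.1 = l
    have hex : ∃ l, P l := by
      obtain ⟨Q, hQ, hpQ⟩ := hcov n₀ p hn₀
      exact ⟨_, n₀, le_rfl, Q, hQ, hpQ, rfl⟩
    -- the largest square containing `p` that occurs after stage `n₀` is never absorbed
    obtain ⟨l, ⟨m, hm, Q, hQ, hpQ, hl⟩, hmin⟩ : ∃ l, P l ∧ ∀ l', P l' → l ≤ l' :=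
      ⟨sInf {l | P l}, Nat.sInf_mem hex, fun l' h => Nat.sInf_le h⟩
    refine ⟨Q, mem_iUnion.2 ⟨m, mem_iInter₂.2 fun n hn => ?_⟩, hpQ⟩
    induction n, hn using Nat.le_induction with
    | base => exact hQ
    | succ n hn ih =>
      refine ⟨Or.inl ih, fun Q' hQ' hlt => ?_⟩
      rw [Set.disjoint_left]
      intro q hq hq'
      have hp' : p ∈ cube Q' := cube_subset hlt.le hq hq' hpQ
      obtain ⟨Q'', h1, h2, h3⟩ := exists_maxFam hQ' hp'
      have hn' : m ≤ n := hn
      have := hmin _ ⟨n + 1, by omega, Q'', h1, h2, rfl⟩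
      omega
  calc content s (⋃ n, A n) ≤ famWt s (⋃ m, S m) := content_le hcovS
    _ = ⨆ m, famWt s (S m) := hSmono.measure_iUnion
    _ ≤ L + ε := iSup_le fun m =>
        (measure_mono (biInter_subset_of_mem (le_refl m))).trans (hWT' m)

/-! ### Dyadic squares and the finite-scale Frostman lemma -/

lemma code_bounds {n : ℕ} {p q : Plane} (h : code n p = code n q) (i : Fin 2) :
    |p i - q i| ≤ (1/2) ^ n := by
  simp only [code, Prod.mk.injEq] at h
  have key : ∀ x y : ℝ, ⌊(2:ℝ)^n * x⌋ = ⌊(2:ℝ)^n * y⌋ → |x - y| ≤ (1/2)^n := by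
    intro x y hxy
    have h1 := Int.abs_sub_lt_one_of_floor_eq_floor hxy
    rw [← mul_sub, abs_mul, abs_of_pos (by positivity)] at h1
    rw [one_div, inv_pow, ← one_div, le_div_iff₀ (by positivity), mul_comm]
    exact h1.le
  fin_cases i
  · exact key _ _ h.1
  · exact key _ _ h.2

lemma dist_le_coord (p q : Plane) : dist p q ≤ |p 0 - q 0| + |p 1 - q 1| := by
  rw [EuclideanSpace.dist_eq, Fin.sum_univ_two, Real.dist_eq, Real.dist_eq]
  apply Real.sqrt_le_iff.2
  constructor
  · positivity
  · nlinarith [abs_nonneg (p 0 - q 0), abs_nonneg (p 1 - q 1)]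

lemma coord_le_dist (p q : Plane) (i : Fin 2) : |p i - q i| ≤ dist p q := by
  rw [dist_eq_norm]
  exact PiLp.norm_apply_le (p - q) i

lemma ediam_cube_le (Q : CubeIdx) : ediam (cube Q) ≤ 2 * (2 : ℝ≥0∞)⁻¹ ^ Q.1 := by
  apply ediam_le
  intro p hp q hq
  have hc : code Q.1 p = code Q.1 q := by
    rw [show code Q.1 q = Q.2 from hq, show code Q.1 p = Q.2 from hp]
  have h : dist p q ≤ 2 * (1/2) ^ Q.1 := by
    have := dist_le_coord p q
    have h0 := code_bounds hc 0
    have h1 := code_bounds hc 1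
    linarith
  rw [edist_dist]
  calc ENNReal.ofReal (dist p q) ≤ ENNReal.ofReal (2 * (1/2) ^ Q.1) := ENNReal.ofReal_le_ofReal h
    _ = _ := by
      rw [ENNReal.ofReal_mul (by norm_num), ENNReal.ofReal_pow (by norm_num), one_div,
        ENNReal.ofReal_inv_of_pos (by norm_num)]
      simp

lemma hausdorff_eq_zero_of_content {s : ℝ} (hs : 0 < s) {A : Set Plane} (h : content s A = 0) :
    μH[s] A = 0 := by
  have hε : ∀ n : ℕ, ∃ D, Covers D A ∧ famWt s D < ((n : ℝ≥0∞) + 1)⁻¹ := fun n =>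
    exists_cover (by rw [h]; simp)
  choose D hD hW using hε
  have hlim0 : Tendsto (fun n : ℕ => ((n : ℝ≥0∞) + 1)⁻¹) atTop (𝓝 0) := by
    have := (tendsto_add_atTop_iff_nat 1).2 ENNReal.tendsto_inv_nat_nhds_zero
    simpa using this
  have hr : Tendsto (fun n : ℕ => 2 * (((n : ℝ≥0∞) + 1)⁻¹) ^ (1 / s)) atTop (𝓝 0) := by
    have h1 : Tendsto (fun n : ℕ => (((n : ℝ≥0∞) + 1)⁻¹) ^ (1 / s)) atTop (𝓝 0) := by
      have := ((ENNReal.continuous_rpow_const (y := 1 / s)).tendsto 0).comp hlim0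
      rwa [ENNReal.zero_rpow_of_pos (by positivity)] at this
    have := ENNReal.Tendsto.const_mul (a := 2) h1 (Or.inr (by simp))
    simpa using this
  have hdiam : ∀ n (Q : D n), (ediam (cube Q.1)) ^ s ≤ 2 ^ s * wt s Q.1.1 := by
    intro n Q
    calc _ ≤ (2 * (2 : ℝ≥0∞)⁻¹ ^ Q.1.1) ^ s := by gcongr; exact ediam_cube_le _
      _ = _ := by rw [ENNReal.mul_rpow_of_nonneg _ _ hs.le]; rfl
  have hmain := Measure.hausdorffMeasure_le_liminf_tsum s A (l := atTop) _ hr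
    (fun n (Q : D n) => cube Q.1) (Eventually.of_forall fun n Q => ?_)
    (Eventually.of_forall fun n p hp => ?_)
  · apply le_antisymm _ zero_le
    refine hmain.trans ?_
    have hb : ∀ n, ∑' Q : D n, (ediam (cube Q.1)) ^ s ≤ 2 ^ s * ((n : ℝ≥0∞) + 1)⁻¹ := by
      intro n
      calc _ ≤ ∑' Q : D n, 2 ^ s * wt s Q.1.1 := ENNReal.tsum_le_tsum fun Q => hdiam n Q
        _ = 2 ^ s * famWt s (D n) := by rw [ENNReal.tsum_mul_left, famWt_eq_tsum]
        _ ≤ _ := by gcongr; exact (hW n).le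
    have ht : Tendsto (fun n : ℕ => (2:ℝ≥0∞) ^ s * ((n : ℝ≥0∞) + 1)⁻¹) atTop (𝓝 0) := by
      have := ENNReal.Tendsto.const_mul (a := (2:ℝ≥0∞) ^ s) hlim0
        (Or.inr (ENNReal.rpow_ne_top_of_nonneg hs.le (by simp)))
      simpa using this
    calc _ ≤ liminf (fun n : ℕ => (2:ℝ≥0∞) ^ s * ((n : ℝ≥0∞) + 1)⁻¹) atTop :=
          liminf_le_liminf (Eventually.of_forall hb)
      _ = 0 := ht.liminf_eq
  · refine (ediam_cube_le _).trans ?_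
    gcongr
    have h1 : wt s Q.1.1 ≤ ((n : ℝ≥0∞) + 1)⁻¹ := (wt_le_of_mem Q.2).trans (hW n).le
    rw [one_div, ENNReal.le_rpow_inv_iff hs]
    exact h1
  · obtain ⟨Q, hQ, hpQ⟩ := hD n p hp
    exact mem_iUnion.2 ⟨⟨Q, hQ⟩, hpQ⟩

/-- A measure can be rescaled inside each square of level `n` so that none of them has mass above `w`. -/
lemma exists_cap_measure (m : Measure Plane) [IsFiniteMeasure m] (n : ℕ) (w : ℝ≥0∞) :
    ∃ m' : Measure Plane, m' ≤ m ∧ ∀ q, m' (cube (n, q)) = min (m (cube (n, q))) w := by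
  let g : ℤ × ℤ → ℝ≥0∞ := fun q => if m (cube (n, q)) ≤ w then 1 else w / m (cube (n, q))
  have hg1 : ∀ q, g q ≤ 1 := by
    intro q
    simp only [g]
    split_ifs with h
    · exact le_rfl
    · exact ENNReal.div_le_of_le_mul (by rw [one_mul]; exact (not_le.1 h).le)
  have hgm : Measurable fun p => g (code n p) := (measurable_of_countable g).comp (measurable_code n)
  refine ⟨m.withDensity fun p => g (code n p), ?_, fun q => ?_⟩
  · calc m.withDensity (fun p => g (code n p)) ≤ m.withDensity 1 :=
          withDensity_mono (Eventually.of_forall fun p => hg1 _)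
      _ = m := withDensity_one
  · rw [withDensity_apply _ (measurableSet_cube _)]
    have : ∫⁻ p in cube (n, q), g (code n p) ∂m = ∫⁻ p in cube (n, q), g q ∂m := by
      apply setLIntegral_congr_fun (measurableSet_cube _)
      intro p hp
      have : code n p = q := hp
      simp only [this]
    rw [this, setLIntegral_const]
    simp only [g]
    split_ifs with h
    · rw [one_mul, min_eq_left h]
    · rw [min_eq_right (not_le.1 h).le, ENNReal.div_mul_cancel _ (measure_ne_top _ _)]
      exact (lt_of_le_of_lt zero_le (not_le.1 h)).ne'

lemma finite_codes {A : Set Plane} (hA : Bornology.IsBounded A) (n : ℕ) :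
    (code n '' A).Finite := by
  obtain ⟨R, hR⟩ := hA.exists_norm_le
  have key : ∀ p ∈ A, ∀ i : Fin 2, ⌊(2:ℝ)^n * p i⌋ ∈ Icc ⌊-((2:ℝ)^n * R)⌋ ⌊(2:ℝ)^n * R⌋ := by
    intro p hp i
    have h1 : |p i| ≤ R := (PiLp.norm_apply_le p i).trans (hR p hp)
    have h2 := abs_le.1 h1
    have h3 : (0:ℝ) < 2 ^ n := by positivity
    refine ⟨Int.floor_le_floor ?_, Int.floor_le_floor ?_⟩ <;> nlinarith
  refine ((finite_Icc ⌊-((2:ℝ)^n * R)⌋ ⌊(2:ℝ)^n * R⌋).prod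
    (finite_Icc ⌊-((2:ℝ)^n * R)⌋ ⌊(2:ℝ)^n * R⌋)).subset ?_
  rintro _ ⟨p, hp, rfl⟩
  exact ⟨key p hp 0, key p hp 1⟩

/-- Finite-scale Frostman lemma. Point masses of weight `wt s N` are placed in the squares of level `N`
meeting `A`, and then truncated at the levels `N - 1, …, j`. The truncation keeps the mass of each
square at least the content of `A` in it, by subadditivity of the content. -/
lemma exists_discrete_frostman (s : ℝ) {A : Set Plane} (hA : Bornology.IsBounded A) (N j : ℕ)
    (hj : j ≤ N) : ∃ m : Measure Plane, IsFiniteMeasure m ∧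
      (∀ S, MeasurableSet S → A ⊆ S → m Sᶜ = 0) ∧
      (∀ n, j ≤ n → n ≤ N → ∀ q, m (cube (n, q)) ≤ wt s n) ∧
      ∀ q, content s (A ∩ cube (j, q)) ≤ m (cube (j, q)) := by
  classical
  induction hk : N - j generalizing j with
  | zero =>
    have hjN : j = N := by omega
    subst hjN
    choose! pt hpt using fun q (hq : q ∈ code j '' A) => hq
    have hfin := finite_codes hA j
    let m : Measure Plane := ∑ q ∈ hfin.toFinset, wt s j • Measure.dirac (pt q)
    have hm : ∀ q, m (cube (j, q)) = if q ∈ code j '' A then wt s j else 0 := by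
      intro q
      simp only [m, Measure.finsetSum_apply, Measure.smul_apply, smul_eq_mul]
      have : ∀ q' ∈ hfin.toFinset, wt s j * Measure.dirac (pt q') (cube (j, q)) =
          if q' = q then wt s j else 0 := by
        intro q' hq'
        have h1 := hpt q' (hfin.mem_toFinset.1 hq')
        rw [Measure.dirac_apply' _ (measurableSet_cube _)]
        by_cases h : q' = q
        · subst h
          rw [indicator_of_mem (show pt q' ∈ cube (j, q') from h1.2)]
          simp
        · rw [indicator_of_notMem, if_neg h, mul_zero]
          intro h2
          exact h (h1.2.symm.trans h2)
      rw [Finset.sum_congr rfl this, Finset.sum_ite_eq']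
      simp only [hfin.mem_toFinset]
    refine ⟨m, ?_, ?_, ?_, ?_⟩
    · refine ⟨?_⟩
      simp only [m, Measure.finsetSum_apply, Measure.smul_apply, smul_eq_mul]
      refine ENNReal.sum_lt_top.2 fun q _ => ?_
      simpa using (wt_ne_top s j).lt_top
    · intro S hS hAS
      simp only [m, Measure.finsetSum_apply, Measure.smul_apply, smul_eq_mul]
      refine Finset.sum_eq_zero fun q hq => ?_
      have h1 := hpt q (hfin.mem_toFinset.1 hq)
      rw [Measure.dirac_apply' _ hS.compl, indicator_of_notMem, mul_zero]
      exact fun h => h (hAS h1.1)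
    · intro n h1 h2 q
      have : n = j := le_antisymm h2 h1
      subst this
      rw [hm]
      split_ifs
      · exact le_rfl
      · exact zero_le
    · intro q
      rw [hm]
      split_ifs with h
      · exact content_le_wt s (Q := (j, q)) inter_subset_right
      · have : A ∩ cube (j, q) = ∅ := by
          ext p
          simp only [mem_inter_iff, mem_empty_iff_false, iff_false, not_and]
          exact fun hp hq => h ⟨p, hp, hq⟩
        rw [this, content_empty]
  | succ k ih =>
    obtain ⟨m, hfin, hsupp, hub, hlb⟩ := ih (j + 1) (by omega) (by omega)
    obtain ⟨m', hle, hm'⟩ := exists_cap_measure m j (wt s j)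
    refine ⟨m', ⟨(hle _).trans_lt (measure_lt_top m _)⟩, ?_, ?_, ?_⟩
    · exact fun S hS hAS => le_antisymm ((hle _).trans (hsupp S hS hAS).le) zero_le
    · intro n h1 h2 q
      rcases h1.eq_or_lt with rfl | h1
      · rw [hm']; exact min_le_right _ _
      · exact (hle _).trans (hub n h1 h2 q)
    · intro q
      rw [hm']
      refine le_min ?_ (content_le_wt s (Q := (j, q)) inter_subset_right)
      have hun : ∀ S : Set Plane, S = ⋃ q' : ℤ × ℤ, S ∩ cube (j + 1, q') := by
        intro S
        ext p
        simp only [mem_iUnion, mem_inter_iff, exists_and_left]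
        exact ⟨fun h => ⟨h, code (j + 1) p, rfl⟩, fun h => h.1⟩
      calc content s (A ∩ cube (j, q)) ≤ ∑' q' : ℤ × ℤ, content s (A ∩ cube (j, q) ∩ cube (j + 1, q')) := by
            conv_lhs => rw [hun (A ∩ cube (j, q))]
            exact content_iUnion_le s _
        _ ≤ ∑' q' : ℤ × ℤ, m (cube (j, q) ∩ cube (j + 1, q')) := by
            refine ENNReal.tsum_le_tsum fun q' => ?_
            rcases (cube (j, q) ∩ cube (j + 1, q')).eq_empty_or_nonempty with h | ⟨p, hp, hp'⟩
            · rw [inter_assoc, h, inter_empty, content_empty]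
              exact zero_le
            · have hsub : cube (j + 1, q') ⊆ cube (j, q) :=
                cube_subset (Q := (j + 1, q')) (Q' := (j, q)) (Nat.le_succ j) hp' hp
              rw [inter_assoc, inter_eq_self_of_subset_right hsub]
              exact hlb q'
        _ = m (cube (j, q)) := by
            conv_rhs => rw [hun (cube (j, q))]
            rw [measure_iUnion]
            · intro a b hab
              rw [Function.onFun, Set.disjoint_left]
              intro p hp hp'
              exact hab ((show code (j + 1) p = a from hp.2).symm.trans hp'.2)
            · exact fun q' => (measurableSet_cube _).inter (measurableSet_cube _)

/-! ### Frostman's lemma for Borel sets -/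

/-- A ball of radius `2 ^ (-n)` meets at most nine dyadic squares of level `n`. -/
lemma measure_closedBall_le_of_cube {m : Measure Plane} {n : ℕ} {w : ℝ≥0∞}
    (h : ∀ q, m (cube (n, q)) ≤ w) (x : Plane) : m (closedBall x ((1/2) ^ n)) ≤ 9 * w := by
  set a := (code n x).1 with ha
  set b := (code n x).2 with hb
  let F : Finset (ℤ × ℤ) := Finset.Icc (a - 1) (a + 1) ×ˢ Finset.Icc (b - 1) (b + 1)
  have key : ∀ u v : ℝ, |u - v| ≤ (1/2) ^ n →
      ⌊(2:ℝ) ^ n * v⌋ - 1 ≤ ⌊(2:ℝ) ^ n * u⌋ ∧ ⌊(2:ℝ) ^ n * u⌋ ≤ ⌊(2:ℝ) ^ n * v⌋ + 1 := by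
    intro u v huv
    have h3 : (0:ℝ) < 2 ^ n := by positivity
    have h1 : |(2:ℝ) ^ n * u - 2 ^ n * v| ≤ 1 := by
      rw [← mul_sub, abs_mul, abs_of_pos h3]
      calc (2:ℝ) ^ n * |u - v| ≤ 2 ^ n * (1/2) ^ n := by gcongr
        _ = 1 := by rw [← mul_pow]; norm_num
    have h2 := abs_le.1 h1
    constructor
    · rw [Int.le_floor]
      push_cast
      linarith [Int.floor_le ((2:ℝ) ^ n * v)]
    · rw [← Int.lt_add_one_iff, Int.floor_lt]
      push_cast
      linarith [Int.lt_floor_add_one ((2:ℝ) ^ n * v)]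
  have hsub : closedBall x ((1/2) ^ n) ⊆ ⋃ q ∈ F, cube (n, q) := by
    intro p hp
    rw [mem_closedBall] at hp
    refine mem_iUnion₂.2 ⟨code n p, ?_, rfl⟩
    simp only [F, Finset.mem_product, Finset.mem_Icc]
    exact ⟨key _ _ ((coord_le_dist p x 0).trans hp), key _ _ ((coord_le_dist p x 1).trans hp)⟩
  calc m (closedBall x ((1/2) ^ n)) ≤ m (⋃ q ∈ F, cube (n, q)) := measure_mono hsub
    _ ≤ ∑ q ∈ F, m (cube (n, q)) := measure_biUnion_finset_le _ _
    _ ≤ ∑ q ∈ F, w := Finset.sum_le_sum fun q _ => h q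
    _ = 9 * w := by
      rw [Finset.sum_const]
      have : F.card = 9 := by
        simp only [F, Finset.card_product, Int.card_Icc]
        have h1 : a + 1 + 1 - (a - 1) = 3 := by ring
        have h2 : b + 1 + 1 - (b - 1) = 3 := by ring
        rw [h1, h2]; rfl
      rw [this]; simp

/-- Capacitability of analytic sets for the dyadic content, in Choquet's form: `B = f (ℕ ^ ℕ)` is cut down
one coordinate at a time to sets `A k` of content `> c`, and the `A k` shrink to a compact set `K`.
The content of `K` itself is not estimated; it is enough that the `A k` are eventually contained in
every neighbourhood of `K`. -/
lemma exists_compact_of_analytic {s : ℝ} {B : Set Plane} (hB : AnalyticSet B) {c : ℝ≥0∞}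
    (hc : c < content s B) : ∃ (A : ℕ → Set Plane) (K : Set Plane), IsCompact K ∧ K ⊆ B ∧
      (∀ k, A k ⊆ B) ∧ (∀ k, c < content s (A k)) ∧
      ∀ U, IsOpen U → K ⊆ U → ∃ k₀, ∀ k ≥ k₀, A k ⊆ U := by
  rw [AnalyticSet] at hB
  rcases hB with rfl | ⟨f, hf, rfl⟩
  · rw [content_empty] at hc
    exact absurd hc not_lt_zero
  have step : ∀ (k : ℕ) (D : Set (ℕ → ℕ)), c < content s (f '' D) →
      ∃ n, c < content s (f '' (D ∩ {x | x k ≤ n})) := by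
    intro k D hD
    by_contra! hcon
    have hmono : Monotone fun n : ℕ => f '' (D ∩ {x | x k ≤ n}) := by
      intro n n' h
      exact image_mono (inter_subset_inter_right _ fun x hx => le_trans hx h)
    have h1 := content_iUnion_le_of_monotone s hmono hcon
    rw [← image_iUnion, ← inter_iUnion] at h1
    have h2 : (⋃ n : ℕ, {x : ℕ → ℕ | x k ≤ n}) = univ :=
      eq_univ_of_forall fun x => mem_iUnion.2 ⟨x k, le_refl (x k)⟩
    rw [h2, inter_univ] at h1
    exact absurd hD (not_lt.2 h1)
  choose! N hN using step
  let D : ℕ → Set (ℕ → ℕ) := fun n => Nat.rec univ (fun k D => D ∩ {x | x k ≤ N k D}) n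
  have hDs : ∀ k, D (k + 1) = D k ∩ {x | x k ≤ N k (D k)} := fun k => rfl
  have hDc : ∀ k, c < content s (f '' D k) := by
    intro k
    induction k with
    | zero => show c < content s (f '' univ); rwa [image_univ]
    | succ k ih => rw [hDs]; exact hN k _ ih
  let τ : ℕ → ℕ := fun k => N k (D k)
  have hDmem : ∀ k x, x ∈ D k ↔ ∀ i < k, x i ≤ τ i := by
    intro k
    induction k with
    | zero => intro x; simp [D]
    | succ k ih =>
      intro x
      rw [hDs, mem_inter_iff, ih]
      constructor
      · rintro ⟨h1, h2⟩ i hi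
        rcases Nat.lt_succ_iff_lt_or_eq.1 hi with h | rfl
        · exact h1 i h
        · exact h2
      · exact fun h => ⟨fun i hi => h i (by omega), h k (by omega)⟩
  -- the compact set of sequences bounded by `τ`
  let P : Set (ℕ → ℕ) := univ.pi fun i => Iic (τ i)
  have hP : IsCompact P := isCompact_univ_pi fun i => (finite_Iic (τ i)).isCompact
  refine ⟨fun k => f '' D k, f '' P, hP.image hf, image_subset_range _ _,
    fun k => image_subset_range _ _, hDc, fun U hU hKU => ?_⟩
  have hanti : ∀ k k', k ≤ k' → f '' D k' ⊆ f '' D k := by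
    intro k k' h
    apply image_mono
    intro x hx
    rw [hDmem] at hx ⊢
    exact fun i hi => hx i (by omega)
  by_contra! hcon
  have hcon' : ∀ k, ∃ x ∈ D k, f x ∉ U := by
    intro k
    obtain ⟨k', hk', h⟩ := hcon k
    obtain ⟨_, ⟨x, hx, rfl⟩, hxU⟩ := not_subset.1 (fun h' => h ((hanti k k' hk').trans h'))
    exact ⟨x, hx, hxU⟩
  choose x hx hxU using hcon'
  -- truncating `x k` at `τ` puts it in `P` and leaves its first `k` coordinates unchanged
  obtain ⟨y, hyP, φ, hφ, hlim⟩ := hP.tendsto_subseq (x := fun k i => min (x k i) (τ i))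
    (fun k i _ => mem_Iic.2 (min_le_right (x k i) (τ i)))
  have hlim' : Tendsto (fun k => x (φ k)) atTop (𝓝 y) := by
    rw [tendsto_pi_nhds] at hlim ⊢
    intro i
    refine (hlim i).congr' ?_
    filter_upwards [eventually_gt_atTop i] with k hk
    exact min_eq_left ((hDmem _ _).1 (hx (φ k)) i (hk.trans_le hφ.le_apply))
  have h1 := (hf.tendsto y).comp hlim'
  have h2 : ∀ᶠ k in atTop, f (x (φ k)) ∈ U :=
    h1.eventually (hU.mem_nhds (hKU (mem_image_of_mem f hyP)))
  obtain ⟨k, hk⟩ := h2.exists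
  exact hxU _ hk

lemma wt_eq_ofReal {s : ℝ} (hs : 0 < s) (n : ℕ) :
    wt s n = ENNReal.ofReal (((1/2 : ℝ) ^ n) ^ s) := by
  unfold wt
  rw [← ENNReal.ofReal_rpow_of_nonneg (by positivity) hs.le, ENNReal.ofReal_pow (by norm_num),
    one_div, ENNReal.ofReal_inv_of_pos (by norm_num)]
  simp

/-- Frostman's lemma for Borel sets in the plane. The measure is a weak limit of finite-scale Frostman
measures on the sets `A k` of `exists_compact_of_analytic`. -/
theorem exists_frostman {B : Set Plane} (hB : MeasurableSet B) {s : ℝ} (hs : 0 < s)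
    (hdim : ENNReal.ofReal s < dimH B) : ∃ K ⊆ B, IsCompact K ∧ ∃ μ : Measure Plane,
      IsProbabilityMeasure μ ∧ μ Kᶜ = 0 ∧
      ∃ C > 0, ∀ x r, 0 < r → μ (closedBall x r) ≤ ENNReal.ofReal (C * r ^ s) := by
  -- a unit square in which `B` has positive content
  obtain ⟨q, hq⟩ : ∃ q, content s (B ∩ cube (0, q)) ≠ 0 := by
    by_contra! hcon
    have h1 : content s B = 0 := by
      apply le_antisymm _ zero_le
      have hun : B = ⋃ q : ℤ × ℤ, B ∩ cube (0, q) := by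
        ext p
        simp only [mem_iUnion, mem_inter_iff, exists_and_left]
        exact ⟨fun h => ⟨h, code 0 p, rfl⟩, fun h => h.1⟩
      calc content s B ≤ ∑' q, content s (B ∩ cube (0, q)) := by
            conv_lhs => rw [hun]
            exact content_iUnion_le s _
        _ = 0 := by simp [hcon]
    have h2 := hausdorff_eq_zero_of_content hs h1
    have h3 : dimH B ≤ s.toNNReal := dimH_le_of_hausdorffMeasure_ne_top (by
      rw [Real.coe_toNNReal _ hs.le, h2]; simp)
    exact absurd hdim (not_lt.2 h3)
  set B' := B ∩ cube (0, q) with hB'def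
  have hB' : MeasurableSet B' := hB.inter (measurableSet_cube _)
  have hbdd : Bornology.IsBounded (cube (0, q)) := by
    rw [isBounded_iff_ediam_ne_top]
    refine ne_top_of_le_ne_top ?_ (ediam_cube_le _)
    simp
  obtain ⟨c, hc0, hc⟩ := exists_between (pos_iff_ne_zero.2 hq)
  have hctop : c ≠ ∞ := ne_top_of_lt hc
  obtain ⟨A, K, hK, hKB, hAB, hAc, hAU⟩ := exists_compact_of_analytic hB'.analyticSet hc
  have hdis : ∀ k, ∃ P : ProbabilityMeasure Plane,
      (∀ S, MeasurableSet S → A k ⊆ S → (P : Measure Plane) Sᶜ = 0) ∧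
      ∀ n ≤ k, ∀ q, (P : Measure Plane) (cube (n, q)) ≤ c⁻¹ * wt s n := by
    intro k
    obtain ⟨m, hfin, hsupp, hub, hlb⟩ := exists_discrete_frostman s
      (hbdd.subset ((hAB k).trans inter_subset_right)) k 0 (Nat.zero_le k)
    have h1 : c ≤ m univ := by
      calc c ≤ content s (A k) := (hAc k).le
        _ = content s (A k ∩ cube (0, q)) := by
          rw [inter_eq_self_of_subset_left ((hAB k).trans inter_subset_right)]
        _ ≤ m (cube (0, q)) := hlb q
        _ ≤ m univ := measure_mono (subset_univ _)
    have h0 : m univ ≠ 0 := (hc0.trans_le h1).ne'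
    have hpr : IsProbabilityMeasure ((m univ)⁻¹ • m) := ⟨by
      rw [Measure.smul_apply, smul_eq_mul, ENNReal.inv_mul_cancel h0 (measure_ne_top _ _)]⟩
    refine ⟨⟨(m univ)⁻¹ • m, hpr⟩, fun S hS hAS => ?_, fun n hn q => ?_⟩
    · show ((m univ)⁻¹ • m) Sᶜ = 0
      rw [Measure.smul_apply, hsupp S hS hAS, smul_zero]
    · show ((m univ)⁻¹ • m) (cube (n, q)) ≤ _
      rw [Measure.smul_apply, smul_eq_mul]
      gcongr
      exact hub n (Nat.zero_le n) hn q
  choose P hPsupp hPub using hdis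
  -- the limit is taken along an ultrafilter, so that no metrisability of the space of measures is used
  have hcpt : IsCompact (closure (range P)) := by
    apply isCompact_closure_of_isTightMeasureSet
    rw [isTightMeasureSet_iff_exists_isCompact_measure_compl_le]
    intro ε _
    refine ⟨closure (cube (0, q)), hbdd.isCompact_closure, ?_⟩
    rintro _ ⟨_, ⟨k, rfl⟩, rfl⟩
    rw [hPsupp k _ isClosed_closure.measurableSet
      (((hAB k).trans inter_subset_right).trans subset_closure)]
    exact zero_le
  obtain ⟨μ, -, hμ⟩ := (isCompact_iff_ultrafilter_le_nhds.1 hcpt)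
    ((hyperfilter ℕ).map P) (by
      rw [le_principal_iff]
      have h : ∀ k, P k ∈ closure (range P) := fun k => subset_closure (mem_range_self k)
      exact mem_map.2 (Filter.Eventually.of_forall h))
  have hlim : Tendsto P (hyperfilter ℕ : Filter ℕ) (𝓝 μ) := hμ
  have hopen : ∀ (G : Set Plane) (a : ℝ≥0∞) (k₀ : ℕ), IsOpen G →
      (∀ k ≥ k₀, (P k : Measure Plane) G ≤ a) → (μ : Measure Plane) G ≤ a := by
    intro G a k₀ hG h
    refine (ProbabilityMeasure.le_liminf_measure_open_of_tendsto hlim hG).trans ?_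
    have hev : ∀ᶠ k in (hyperfilter ℕ : Filter ℕ), (P k : Measure Plane) G ≤ a :=
      (Nat.hyperfilter_le_atTop) ((eventually_ge_atTop k₀).mono h)
    exact (liminf_le_liminf hev).trans (liminf_const a).le
  refine ⟨K, hKB.trans inter_subset_left, hK, μ, inferInstance, ?_, ?_⟩
  · apply measure_null_of_locally_null
    intro x hx
    obtain ⟨ε, hε, hsub⟩ := nhds_basis_closedBall.mem_iff.1 (hK.isClosed.isOpen_compl.mem_nhds hx)
    refine ⟨ball x ε, mem_nhdsWithin_of_mem_nhds (ball_mem_nhds x hε), ?_⟩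
    obtain ⟨k₀, hk₀⟩ := hAU (closedBall x ε)ᶜ isClosed_closedBall.isOpen_compl
      (subset_compl_comm.1 hsub)
    apply le_antisymm _ zero_le
    apply hopen _ _ k₀ isOpen_ball
    intro k hk
    rw [← hPsupp k _ isClosed_closedBall.isOpen_compl.measurableSet (hk₀ k hk), compl_compl]
    exact measure_mono ball_subset_closedBall
  · have hball : ∀ x (n : ℕ), (μ : Measure Plane) (ball x ((1/2) ^ n)) ≤ 9 * (c⁻¹ * wt s n) := by
      intro x n
      apply hopen _ _ n isOpen_ball
      intro k hk
      exact (measure_mono ball_subset_closedBall).trans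
        (measure_closedBall_le_of_cube (hPub k n hk) x)
    have hcr : 0 < c.toReal := ENNReal.toReal_pos hc0.ne' hctop
    refine ⟨2 ^ s + 9 * (c.toReal⁻¹ * 4 ^ s), by positivity, fun x r hr => ?_⟩
    rcases le_or_gt (2 * r) 1 with h | h
    · obtain ⟨n, hn1, hn2⟩ := exists_nat_pow_near_of_lt_one (y := (1/2 : ℝ)) (by positivity) h
        (by norm_num) (by norm_num)
      have hr1 : r < (1/2) ^ n := by linarith
      have hr2 : (1/2 : ℝ) ^ n ≤ 4 * r := by rw [pow_succ] at hn1; linarith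
      calc (μ : Measure Plane) (closedBall x r) ≤ (μ : Measure Plane) (ball x ((1/2) ^ n)) :=
            measure_mono (closedBall_subset_ball hr1)
        _ ≤ 9 * (c⁻¹ * wt s n) := hball x n
        _ = ENNReal.ofReal (9 * (c.toReal⁻¹ * ((1/2) ^ n) ^ s)) := by
          rw [wt_eq_ofReal hs, ENNReal.ofReal_mul (by norm_num),
            ENNReal.ofReal_mul (by positivity), ENNReal.ofReal_inv_of_pos hcr,
            ENNReal.ofReal_toReal hctop]
          simp
        _ ≤ _ := by
          apply ENNReal.ofReal_le_ofReal
          have h4 : ((1/2 : ℝ) ^ n) ^ s ≤ 4 ^ s * r ^ s := by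
            rw [← Real.mul_rpow (by norm_num) hr.le]
            exact Real.rpow_le_rpow (by positivity) hr2 hs.le
          calc 9 * (c.toReal⁻¹ * ((1/2) ^ n) ^ s) ≤ 9 * (c.toReal⁻¹ * (4 ^ s * r ^ s)) := by gcongr
            _ ≤ _ := by
              have : (0:ℝ) ≤ 2 ^ s * r ^ s := by positivity
              linarith
    · refine prob_le_one.trans ?_
      rw [← ENNReal.ofReal_one]
      apply ENNReal.ofReal_le_ofReal
      have h1 : (1:ℝ) ≤ 2 ^ s * r ^ s := by
        rw [← Real.mul_rpow (by norm_num) hr.le]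
        exact Real.one_le_rpow h.le hs.le
      have : (0:ℝ) ≤ 9 * (c.toReal⁻¹ * 4 ^ s) * r ^ s := by positivity
      linarith

/-! ### Tubes and the `L²` estimate -/

/-- The cross product of two plane vectors. -/
def cr (u v : Plane) : ℝ := u 0 * v 1 - u 1 * v 0

/-- Twice the signed area of the triangle `x y z`. -/
def det (x y z : Plane) : ℝ := cr (y - x) (z - x)

lemma normSq_eq (u : Plane) : ‖u‖ ^ 2 = u 0 ^ 2 + u 1 ^ 2 := by
  rw [EuclideanSpace.real_norm_sq_eq, Fin.sum_univ_two]

lemma abs_cr_le (u v : Plane) : |cr u v| ≤ ‖u‖ * ‖v‖ := by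
  apply abs_le_of_sq_le_sq _ (by positivity)
  rw [mul_pow, normSq_eq, normSq_eq, cr]
  nlinarith [sq_nonneg (u 0 * v 0 + u 1 * v 1)]

lemma cr_smul_eq (u v w : Plane) : cr v w • u = cr u w • v - cr u v • w := by
  ext i
  fin_cases i <;> simp [cr] <;> ring

/-- Vectors nearly parallel to `u` are nearly parallel to each other. -/
lemma norm_mul_abs_cr_le (u v w : Plane) :
    ‖u‖ * |cr v w| ≤ |cr u v| * ‖w‖ + |cr u w| * ‖v‖ := by
  calc ‖u‖ * |cr v w| = ‖cr v w • u‖ := by rw [norm_smul, Real.norm_eq_abs, mul_comm]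
    _ = ‖cr u w • v - cr u v • w‖ := by rw [cr_smul_eq]
    _ ≤ ‖cr u w • v‖ + ‖cr u v • w‖ := norm_sub_le _ _
    _ = _ := by rw [norm_smul, norm_smul, Real.norm_eq_abs, Real.norm_eq_abs, add_comm]

lemma abs_det_le (x y z : Plane) : |det x y z| ≤ ‖y - x‖ * ‖z - x‖ := abs_cr_le _ _

lemma norm_mul_abs_det_le (x y z w : Plane) :
    ‖y - x‖ * |det x z w| ≤ |det x y z| * ‖w - x‖ + |det x y w| * ‖z - x‖ :=
  norm_mul_abs_cr_le _ _ _

lemma det_swap (x y z : Plane) : det x z y = - det x y z := by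
  simp only [det, cr]; ring

lemma det_rotate (x y z : Plane) : det y z x = det x y z := by
  simp only [det, cr, PiLp.sub_apply]; ring

lemma abs_det_swap (x y z : Plane) : |det x z y| = |det x y z| := by rw [det_swap, abs_neg]

/-- If `z` is close to both the line through `x` and `y` and the line through `x'` and `y`, and these
lines are transversal, then `z` is close to `y`. -/
lemma abs_det_mul_dist_le (x x' y z : Plane) :
    |det x x' y| * ‖z - y‖ ≤ |det x y z| * ‖y - x'‖ + |det x' y z| * ‖y - x‖ := by
  have h := norm_mul_abs_cr_le (z - y) (y - x) (y - x')
  have h1 : |cr (y - x) (y - x')| = |det x x' y| := by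
    congr 1; simp only [det, cr, PiLp.sub_apply]; ring
  have h2 : |cr (z - y) (y - x)| = |det x y z| := by
    rw [← abs_neg]; congr 1; simp only [det, cr, PiLp.sub_apply]; ring
  have h3 : |cr (z - y) (y - x')| = |det x' y z| := by
    rw [← abs_neg]; congr 1; simp only [det, cr, PiLp.sub_apply]; ring
  rw [h1, h2, h3] at h
  linarith

/-- The radial projection of `y` from `x`. -/
noncomputable def dir (x y : Plane) : Plane := ‖y - x‖⁻¹ • (y - x)

lemma abs_det_le_dir (x y z : Plane) :
    |det x y z| ≤ ‖y - x‖ * ‖z - x‖ * ‖dir x z - dir x y‖ := by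
  have h1 : ∀ u : Plane, u = ‖u‖ • (‖u‖⁻¹ • u) := by
    intro u
    by_cases hu : u = 0
    · simp [hu]
    · rw [smul_smul, mul_inv_cancel₀ (norm_ne_zero_iff.2 hu), one_smul]
  have h2 : det x y z = ‖y - x‖ * ‖z - x‖ * cr (dir x y) (dir x z - dir x y) := by
    conv_lhs => rw [det, h1 (y - x), h1 (z - x)]
    simp only [dir, cr, PiLp.smul_apply, smul_eq_mul, PiLp.sub_apply]
    ring
  have h3 : ‖dir x y‖ ≤ 1 := by
    rw [dir, norm_smul, norm_inv, norm_norm]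
    exact inv_mul_le_one
  rw [h2, abs_mul, abs_of_nonneg (by positivity : (0:ℝ) ≤ ‖y - x‖ * ‖z - x‖)]
  gcongr
  calc _ ≤ _ := abs_cr_le _ _
    _ ≤ 1 * ‖dir x z - dir x y‖ := by gcongr
    _ = _ := one_mul _

lemma continuous_det : Continuous fun p : Plane × Plane × Plane => det p.1 p.2.1 p.2.2 := by
  unfold det cr
  fun_prop

lemma measurable_det : Measurable fun p : Plane × Plane × Plane => det p.1 p.2.1 p.2.2 :=
  continuous_det.measurable

lemma measurable_det_comp {α : Type*} [MeasurableSpace α] {f g h : α → Plane}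
    (hf : Measurable f) (hg : Measurable g) (hh : Measurable h) :
    Measurable fun a => det (f a) (g a) (h a) :=
  measurable_det.comp (hf.prodMk (hg.prodMk hh))

/-- The part of the `x`-fibre of `G` close to the line through `x` and `y`. The width is measured by the
determinant. -/
def tube (G : Set (Plane × Plane)) (δ : ℝ) (x y : Plane) : Set Plane :=
  {z | (x, z) ∈ G ∧ |det x y z| ≤ δ}

lemma measurableSet_tube {G : Set (Plane × Plane)} (hG : MeasurableSet G) (δ : ℝ) (x y : Plane) :
    MeasurableSet (tube G δ x y) :=
  (measurable_prodMk_left hG).inter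
    (measurableSet_le (measurable_det_comp measurable_const measurable_const measurable_id).abs
      measurable_const)

lemma measurable_measure_tube {G : Set (Plane × Plane)} (hG : MeasurableSet G) (δ : ℝ)
    (μ : Measure Plane) [SFinite μ] :
    Measurable fun p : Plane × Plane => μ (tube G δ p.1 p.2) := by
  have hS : MeasurableSet {q : (Plane × Plane) × Plane | (q.1.1, q.2) ∈ G ∧
      |det q.1.1 q.1.2 q.2| ≤ δ} := by
    refine MeasurableSet.inter ?_ ?_
    · exact (measurable_fst.fst.prodMk measurable_snd) hG
    · exact measurableSet_le
        (measurable_det_comp measurable_fst.fst measurable_fst.snd measurable_snd).abs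
        measurable_const
  exact measurable_measure_prodMk_left hS

lemma lintegral_sq_le {α : Type*} [MeasurableSpace α] {μ : Measure α} [IsProbabilityMeasure μ]
    {f : α → ℝ≥0∞} (hf : Measurable f) : (∫⁻ a, f a ∂μ) ^ 2 ≤ ∫⁻ a, f a ^ 2 ∂μ := by
  have h := ENNReal.lintegral_mul_le_Lp_mul_Lq μ (Real.HolderConjugate.two_two) hf.aemeasurable
    (g := fun _ => 1) aemeasurable_const
  simp only [Pi.mul_def, mul_one, ENNReal.one_rpow, lintegral_const, measure_univ] at h
  have h2 := pow_le_pow_left' h 2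
  refine h2.trans (le_of_eq ?_)
  rw [← ENNReal.rpow_natCast, ← ENNReal.rpow_mul]
  norm_num

/-- The set `W` of points `y` whose tubes through `x` and `x'` are both heavy and transversal is small.
The triples `(y, z, z')` with `y ∈ W`, `z` in the tube from `x` and `z'` in the tube from `x'` have
measure at least `τ ^ 2 * μ W`; for fixed `z` and `z'`, on the other hand, `y` is confined to a small
ball around the intersection of two transversal tubes. -/
lemma measure_transversal_le {μ : Measure Plane} [IsProbabilityMeasure μ]
    {G : Set (Plane × Plane)} (hG : MeasurableSet G) {r R ρ δ : ℝ} (hr : 0 < r) (hρ : 0 < ρ)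
    (hGr : ∀ p ∈ G, r ≤ ‖p.2 - p.1‖ ∧ ‖p.2 - p.1‖ ≤ R) {b τ : ℝ≥0∞}
    (hb : ∀ y, μ (closedBall y (4 * R ^ 2 * δ / (r * ρ))) ≤ b) (hτ : τ ≠ 0) (hτ' : τ ≠ ∞)
    {x x' : Plane} {W : Set Plane} (hW : MeasurableSet W)
    (hWG : ∀ y ∈ W, (x, y) ∈ G ∧ (x', y) ∈ G ∧ ρ < |det x x' y|)
    (hWτ : ∀ y ∈ W, τ ≤ μ (tube G δ x y) ∧ τ ≤ μ (tube G δ x' y)) :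
    μ W ≤ b / τ ^ 2 := by
  rw [ENNReal.le_div_iff_mul_le (Or.inl (pow_ne_zero 2 hτ)) (Or.inl (ENNReal.pow_ne_top hτ'))]
  let Q : Set (Plane × Plane × Plane) :=
    {q | q.1 ∈ W ∧ q.2.1 ∈ tube G δ x q.1 ∧ q.2.2 ∈ tube G δ x' q.1}
  have hQ : MeasurableSet Q := by
    refine (measurable_fst hW).inter (MeasurableSet.inter (MeasurableSet.inter ?_ ?_)
      (MeasurableSet.inter ?_ ?_))
    · exact (measurable_const.prodMk measurable_snd.fst) hG
    · exact measurableSet_le (measurable_det_comp measurable_const measurable_fst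
        measurable_snd.fst).abs measurable_const
    · exact (measurable_const.prodMk measurable_snd.snd) hG
    · exact measurableSet_le (measurable_det_comp measurable_const measurable_fst
        measurable_snd.snd).abs measurable_const
  have h1 : μ W * τ ^ 2 ≤ (μ.prod (μ.prod μ)) Q := by
    rw [Measure.prod_apply hQ, mul_comm]
    calc τ ^ 2 * μ W = ∫⁻ y, W.indicator (fun _ => τ ^ 2) y ∂μ := by
          rw [lintegral_indicator_const hW]
      _ ≤ _ := by
          apply lintegral_mono
          intro y
          by_cases hy : y ∈ W
          · have : Prod.mk y ⁻¹' Q = tube G δ x y ×ˢ tube G δ x' y := by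
              ext q
              simp only [Q, mem_preimage, mem_ofPred_eq, mem_prod, hy, true_and]
            simp only [indicator_of_mem hy]
            rw [this, Measure.prod_prod, sq]
            exact mul_le_mul' (hWτ y hy).1 (hWτ y hy).2
          · simp only [indicator_of_notMem hy]
            exact zero_le
  refine h1.trans ?_
  rw [Measure.prod_apply_symm hQ]
  calc _ ≤ ∫⁻ _, b ∂(μ.prod μ) := by
        apply lintegral_mono
        intro q
        rcases ((fun y => (y, q)) ⁻¹' Q).eq_empty_or_nonempty with h | ⟨y₁, hy₁⟩
        · simp only [h, measure_empty]
          exact zero_le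
        · refine (measure_mono fun y₂ hy₂ => ?_).trans (hb y₁)
          obtain ⟨hy₁W, ⟨ha, ha1⟩, ⟨hb, hb1⟩⟩ := hy₁
          obtain ⟨hy₂W, ⟨-, ha2⟩, ⟨-, hb2⟩⟩ := hy₂
          simp only at *
          have key : ∀ w z : Plane, (w, z) ∈ G → (w, y₁) ∈ G → (w, y₂) ∈ G → |det w y₁ z| ≤ δ →
              |det w y₂ z| ≤ δ → r * |det w y₁ y₂| ≤ 2 * R * δ := by
            intro w z h1 h2 h3 h4 h5
            have h := norm_mul_abs_det_le w z y₁ y₂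
            rw [abs_det_swap w y₁ z, abs_det_swap w y₂ z] at h
            have e1 := hGr _ h1
            have e2 := hGr _ h2
            have e3 := hGr _ h3
            simp only at e1 e2 e3
            have hδ : 0 ≤ δ := (abs_nonneg _).trans h4
            calc r * |det w y₁ y₂| ≤ ‖z - w‖ * |det w y₁ y₂| := by gcongr; exact e1.1
              _ ≤ _ := h
              _ ≤ δ * R + δ * R := by gcongr; exacts [e3.2, e2.2]
              _ = _ := by ring
          have k1 := key x q.1 ha (hWG _ hy₁W).1 (hWG _ hy₂W).1 ha1 ha2
          have k2 := key x' q.2 hb (hWG _ hy₁W).2.1 (hWG _ hy₂W).2.1 hb1 hb2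
          have k3 := abs_det_mul_dist_le x x' y₁ y₂
          have k4 := (hGr _ (hWG _ hy₁W).1)
          have k5 := (hGr _ (hWG _ hy₁W).2.1)
          have k6 := (hWG _ hy₁W).2.2
          simp only at k4 k5
          have hR : 0 ≤ R := (norm_nonneg _).trans k4.2
          rw [mem_closedBall, dist_eq_norm, le_div_iff₀ (by positivity)]
          have k7 : ‖y₂ - y₁‖ * ρ ≤ |det x y₁ y₂| * R + |det x' y₁ y₂| * R := by
            calc ‖y₂ - y₁‖ * ρ ≤ ‖y₂ - y₁‖ * |det x x' y₁| := by gcongr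
              _ ≤ |det x y₁ y₂| * ‖y₁ - x'‖ + |det x' y₁ y₂| * ‖y₁ - x‖ := by
                rw [mul_comm]; exact k3
              _ ≤ _ := by gcongr; exacts [k5.2, k4.2]
          calc ‖y₂ - y₁‖ * (r * ρ) = (‖y₂ - y₁‖ * ρ) * r := by ring
            _ ≤ (|det x y₁ y₂| * R + |det x' y₁ y₂| * R) * r := by gcongr
            _ = (r * |det x y₁ y₂|) * R + (r * |det x' y₁ y₂|) * R := by ring
            _ ≤ (2 * R * δ) * R + (2 * R * δ) * R := by gcongr
            _ = _ := by ring
    _ = b := by simp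

/-- The basic `L²` estimate for the set of pairs with heavy thin tubes. By Cauchy–Schwarz it is enough to
estimate the triples `(x, x', y)` with both `(x, y)` and `(x', y)` heavy. The three terms account for
`x` and `x'` closer than `ρ₁`, for `y` near the line through `x` and `x'`, and for transversal
tubes. -/
lemma measure_heavy_sq_le {μ ν : Measure Plane} [IsProbabilityMeasure μ] [IsProbabilityMeasure ν]
    {G : Set (Plane × Plane)} (hG : MeasurableSet G) {r R ρ ρ₁ δ d : ℝ} (hr : 0 < r) (hρ : 0 < ρ)
    (hρ₁ : 0 < ρ₁) (hGr : ∀ p ∈ G, r ≤ ‖p.2 - p.1‖ ∧ ‖p.2 - p.1‖ ≤ R) (hd : 2 * R * ρ ≤ d * ρ₁)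
    {κ a b τ : ℝ≥0∞} (hκ : ∀ p ∈ G, μ (tube G d p.1 p.2) ≤ κ)
    (ha : ∀ x, ν (closedBall x ρ₁) ≤ a)
    (hb : ∀ y, μ (closedBall y (4 * R ^ 2 * δ / (r * ρ))) ≤ b) (hτ : τ ≠ 0) (hτ' : τ ≠ ∞) :
    ((ν.prod μ) {p | p ∈ G ∧ τ ≤ μ (tube G δ p.1 p.2)}) ^ 2 ≤ a + (κ + b / τ ^ 2) := by
  set H : Set (Plane × Plane) := {p | p ∈ G ∧ τ ≤ μ (tube G δ p.1 p.2)}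
  have hH : MeasurableSet H :=
    hG.inter (measurableSet_le measurable_const (measurable_measure_tube hG δ μ))
  let T : Set ((Plane × Plane) × Plane) := {t | (t.1.1, t.2) ∈ H ∧ (t.1.2, t.2) ∈ H}
  have hT : MeasurableSet T :=
    ((measurable_fst.fst.prodMk measurable_snd) hH).inter
      ((measurable_fst.snd.prodMk measurable_snd) hH)
  have h1 : ((ν.prod μ) H) ^ 2 ≤ ((ν.prod ν).prod μ) T := by
    rw [Measure.prod_apply_symm hH, Measure.prod_apply_symm hT]
    refine (lintegral_sq_le (measurable_measure_prodMk_right hH)).trans (le_of_eq ?_)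
    apply lintegral_congr
    intro y
    rw [sq, ← Measure.prod_prod]
    rfl
  refine h1.trans ?_
  rw [Measure.prod_apply hT]
  let N : Set (Plane × Plane) := {p | dist p.2 p.1 ≤ ρ₁}
  have hN : MeasurableSet N :=
    measurableSet_le (measurable_snd.dist measurable_fst) measurable_const
  have hfib : ∀ p : Plane × Plane, μ (Prod.mk p ⁻¹' T) ≤
      N.indicator (fun _ => 1) p + (κ + b / τ ^ 2) := by
    rintro ⟨x, x'⟩
    by_cases hx : (x, x') ∈ N
    · rw [indicator_of_mem hx]
      exact prob_le_one.trans le_self_add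
    rw [indicator_of_notMem hx, zero_add]
    have hx' : ρ₁ < ‖x' - x‖ := by rw [← dist_eq_norm]; exact not_le.1 hx
    let V : Set Plane := {y | |det x x' y| ≤ ρ}
    have hV : MeasurableSet V := measurableSet_le
      (measurable_det_comp measurable_const measurable_const measurable_id).abs measurable_const
    have hT' : MeasurableSet (Prod.mk (x, x') ⁻¹' T) := measurable_prodMk_left hT
    rw [← measure_inter_add_sdiff (Prod.mk (x, x') ⁻¹' T) hV]
    gcongr
    · -- two points near the line through `x` and `x'` lie in a common tube of width `d` through `x`
      rcases (Prod.mk (x, x') ⁻¹' T ∩ V).eq_empty_or_nonempty with h | ⟨y, hy, hyV⟩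
      · rw [h, measure_empty]; exact zero_le
      · refine (measure_mono fun z hz => ?_).trans (hκ _ hy.1.1)
        obtain ⟨hz, hzV⟩ := hz
        refine ⟨hz.1.1, ?_⟩
        have e1 := (hGr _ hy.1.1).2
        have e2 := (hGr _ hz.1.1).2
        have e3 := norm_mul_abs_det_le x x' y z
        simp only at e1 e2
        have hyV' : |det x x' y| ≤ ρ := hyV
        have hzV' : |det x x' z| ≤ ρ := hzV
        have : ρ₁ * |det x y z| ≤ ρ₁ * d := by
          calc ρ₁ * |det x y z| ≤ ‖x' - x‖ * |det x y z| := by gcongr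
            _ ≤ _ := e3
            _ ≤ ρ * R + ρ * R := by gcongr
            _ = 2 * R * ρ := by ring
            _ ≤ _ := by rw [mul_comm ρ₁]; exact hd
        exact le_of_mul_le_mul_left this hρ₁
    · apply measure_transversal_le hG hr hρ hGr hb hτ hτ' (hT'.diff hV)
      · rintro y ⟨hy, hyV⟩
        exact ⟨hy.1.1, hy.2.1, not_le.1 hyV⟩
      · rintro y ⟨hy, -⟩
        exact ⟨hy.1.2, hy.2.2⟩
  calc _ ≤ ∫⁻ p, (N.indicator (fun _ => 1) p + (κ + b / τ ^ 2)) ∂(ν.prod ν) := lintegral_mono hfib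
    _ = (ν.prod ν) N + (κ + b / τ ^ 2) := by
      rw [lintegral_add_right _ measurable_const, lintegral_indicator_const hN]
      simp
    _ ≤ _ := by
      gcongr
      rw [Measure.prod_apply hN]
      calc _ ≤ ∫⁻ _, a ∂ν := lintegral_mono fun x => ha x
        _ = a := by simp

/-! ### Iteration over scales -/

/-- Superexponentially decreasing scales `e (j + 1) = e j ^ β`, starting from a sufficiently small one. -/
lemma exists_scales {β v C ε₀ : ℝ} (hβ : 1 < β) (hv : 0 < v) (hε₀ : 0 < ε₀) :
    ∃ e : ℕ → ℝ, (∀ j, 0 < e j) ∧ (∀ j, e j < 1) ∧ (∀ j, e j ≤ ε₀) ∧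
      (∀ j, e (j + 1) = e j ^ β) ∧ (∀ j, C * e j ^ v ≤ 1 / 64 * (1 / 4) ^ j) ∧
      ∀ j, e j ≤ (1 / 2) ^ j := by
  have hlim : ∀ p : ℝ, 0 < p → Tendsto (fun x : ℝ => x ^ p) (𝓝[>] 0) (𝓝 0) := by
    intro p hp
    have h := (Real.continuousAt_rpow_const 0 p (Or.inr hp.le)).tendsto
    rw [Real.zero_rpow hp.ne'] at h
    exact h.mono_left nhdsWithin_le_nhds
  have hβ' : 0 < β - 1 := sub_pos.2 hβ
  have h1 : ∀ᶠ x : ℝ in 𝓝[>] 0, 0 < x := eventually_mem_nhdsWithin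
  have h2 : ∀ᶠ x : ℝ in 𝓝[>] 0, x < min 1 ε₀ :=
    nhdsWithin_le_nhds (Iio_mem_nhds (lt_min one_pos hε₀))
  have h3 : ∀ᶠ x : ℝ in 𝓝[>] 0, C * x ^ v < 1 / 64 := by
    have := (hlim v hv).const_mul C
    rw [mul_zero] at this
    exact this.eventually (Iio_mem_nhds (by norm_num))
  have h4 : ∀ᶠ x : ℝ in 𝓝[>] 0, x ^ ((β - 1) * v) < 1 / 4 :=
    (hlim _ (by positivity)).eventually (Iio_mem_nhds (by norm_num))
  have h5 : ∀ᶠ x : ℝ in 𝓝[>] 0, x ^ (β - 1) < 1 / 2 :=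
    (hlim _ hβ').eventually (Iio_mem_nhds (by norm_num))
  obtain ⟨e₀, a1, a2, a3, a4, a5⟩ := (h1.and (h2.and (h3.and (h4.and h5)))).exists
  let e : ℕ → ℝ := fun n => Nat.rec e₀ (fun _ x => x ^ β) n
  have hes : ∀ j, e (j + 1) = e j ^ β := fun j => rfl
  have hpos : ∀ j, 0 < e j := by
    intro j
    induction j with
    | zero => exact a1
    | succ j ih => rw [hes]; exact Real.rpow_pos_of_pos ih _
  have hle : ∀ j, e j ≤ e₀ := by
    intro j
    induction j with
    | zero => exact le_rfl
    | succ j ih =>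
      rw [hes]
      refine le_trans ?_ ih
      have hlt : e j ≤ 1 := ih.trans (a2.le.trans (min_le_left _ _))
      calc e j ^ β ≤ e j ^ (1:ℝ) := Real.rpow_le_rpow_of_exponent_ge (hpos j) hlt hβ.le
        _ = e j := Real.rpow_one _
  have hstep : ∀ j, e (j + 1) = e j * e j ^ (β - 1) := by
    intro j
    rw [hes, ← Real.rpow_one_add' (hpos j).le (by linarith)]
    congr 1; ring
  refine ⟨e, hpos, fun j => (hle j).trans_lt (a2.trans_le (min_le_left _ _)),
    fun j => (hle j).trans (a2.le.trans (min_le_right _ _)), hes, fun j => ?_, fun j => ?_⟩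
  · induction j with
    | zero => rw [pow_zero, mul_one]; exact a3.le
    | succ j ih =>
      rw [hstep, Real.mul_rpow (hpos j).le (Real.rpow_nonneg (hpos j).le _),
        ← Real.rpow_mul (hpos j).le]
      have h6 : e j ^ ((β - 1) * v) ≤ 1 / 4 :=
        (Real.rpow_le_rpow (hpos j).le (hle j) (by positivity)).trans a4.le
      have h7 : 0 ≤ e j ^ ((β - 1) * v) := Real.rpow_nonneg (hpos j).le _
      calc C * (e j ^ v * e j ^ ((β - 1) * v)) = (C * e j ^ v) * e j ^ ((β - 1) * v) := by ring
        _ ≤ (1 / 64 * (1 / 4) ^ j) * e j ^ ((β - 1) * v) := by gcongr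
        _ ≤ (1 / 64 * (1 / 4) ^ j) * (1 / 4) := by gcongr
        _ = _ := by ring
  · induction j with
    | zero => rw [pow_zero]; exact (hle 0).trans (a2.le.trans (min_le_left _ _))
    | succ j ih =>
      rw [hstep, pow_succ]
      have h6 : e j ^ (β - 1) ≤ 1 / 2 :=
        (Real.rpow_le_rpow (hpos j).le (hle j) hβ'.le).trans a5.le
      have h7 : 0 ≤ e j ^ (β - 1) := Real.rpow_nonneg (hpos j).le _
      gcongr

/-- The `L²` estimate at width `δ`, given that tubes of width `e` have measure at most `κ`. The condition
`hδe` says that `δ` is a large enough power of `e`. -/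
lemma measure_heavy_sq_le_of_scale {μ ν : Measure Plane} [IsProbabilityMeasure μ]
    [IsProbabilityMeasure ν] {G : Set (Plane × Plane)} (hG : MeasurableSet G) {r R : ℝ}
    (hr : 0 < r) (hR : 0 < R) (hGr : ∀ p ∈ G, r ≤ ‖p.2 - p.1‖ ∧ ‖p.2 - p.1‖ ≤ R)
    {s u v t Cμ Cν : ℝ} (hCμ : 0 < Cμ) (hCν : 0 < Cν)
    (hμ : ∀ x ρ, 0 < ρ → μ (closedBall x ρ) ≤ ENNReal.ofReal (Cμ * ρ ^ s))
    (hν : ∀ x ρ, 0 < ρ → ν (closedBall x ρ) ≤ ENNReal.ofReal (Cν * ρ ^ u))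
    (hvu : v ≤ u) (hv1 : v ≤ 1)
    {e δ κ : ℝ} (he : 0 < e) (he1 : e < 1) (hδ : 0 < δ) (hκ0 : 0 ≤ κ)
    (hδe : δ ^ (s - 2 * t) ≤ e ^ (2 * s + 1))
    (hκ : ∀ p ∈ G, μ (tube G e p.1 p.2) ≤ ENNReal.ofReal κ) :
    ((ν.prod μ) {p | p ∈ G ∧ ENNReal.ofReal (δ ^ t) ≤ μ (tube G δ p.1 p.2)}) ^ 2 ≤
      ENNReal.ofReal (κ + (Cν + Cμ * (8 * R ^ 3 / r) ^ s) * e ^ v) := by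
  have hδt : 0 < δ ^ t := Real.rpow_pos_of_pos hδ _
  have h := measure_heavy_sq_le (μ := μ) (ν := ν) hG (ρ := e ^ 2 / (2 * R)) (ρ₁ := e) (δ := δ)
    (d := e) (κ := ENNReal.ofReal κ) (a := ENNReal.ofReal (Cν * e ^ u))
    (b := ENNReal.ofReal (Cμ * (4 * R ^ 2 * δ / (r * (e ^ 2 / (2 * R)))) ^ s))
    (τ := ENNReal.ofReal (δ ^ t)) hr (by positivity) he hGr
    (le_of_eq (by field_simp)) hκ (fun x => hν x e he) (fun y => hμ y _ (by positivity))
    (by simpa using hδt) ENNReal.ofReal_ne_top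
  refine h.trans ?_
  have hes : 0 < e ^ (2 * s) := Real.rpow_pos_of_pos he _
  have hb : Cμ * (4 * R ^ 2 * δ / (r * (e ^ 2 / (2 * R)))) ^ s / (δ ^ t) ^ 2 ≤
      Cμ * (8 * R ^ 3 / r) ^ s * e := by
    have e1 : 4 * R ^ 2 * δ / (r * (e ^ 2 / (2 * R))) = (8 * R ^ 3 / r) * δ / e ^ 2 := by
      field_simp; ring
    have e2 : (e ^ 2) ^ s = e ^ (2 * s) := by
      rw [← Real.rpow_natCast, ← Real.rpow_mul he.le]; norm_num
    have e3 : δ ^ s = δ ^ (s - 2 * t) * (δ ^ t) ^ 2 := by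
      rw [← Real.rpow_natCast, ← Real.rpow_mul hδ.le, ← Real.rpow_add hδ]
      congr 1; push_cast; ring
    have e4 : e ^ (2 * s + 1) = e ^ (2 * s) * e := by
      rw [Real.rpow_add he, Real.rpow_one]
    rw [e1, Real.div_rpow (by positivity) (by positivity), Real.mul_rpow (by positivity) hδ.le, e2,
      e3]
    have e5 : Cμ * ((8 * R ^ 3 / r) ^ s * (δ ^ (s - 2 * t) * (δ ^ t) ^ 2) / e ^ (2 * s)) /
        (δ ^ t) ^ 2 = Cμ * (8 * R ^ 3 / r) ^ s * (δ ^ (s - 2 * t) / e ^ (2 * s)) := by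
      field_simp
    rw [e5]
    gcongr
    rw [div_le_iff₀ hes]
    linarith
  rw [← ENNReal.ofReal_pow hδt.le, ← ENNReal.ofReal_div_of_pos (by positivity),
    ← ENNReal.ofReal_add hκ0 (by positivity), ← ENNReal.ofReal_add (by positivity) (by positivity)]
  apply ENNReal.ofReal_le_ofReal
  have f1 : e ^ u ≤ e ^ v := Real.rpow_le_rpow_of_exponent_ge he he1.le hvu
  have f2 : e ≤ e ^ v := by
    calc e = e ^ (1:ℝ) := (Real.rpow_one _).symm
      _ ≤ _ := Real.rpow_le_rpow_of_exponent_ge he he1.le hv1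
  calc _ ≤ Cν * e ^ v + (κ + Cμ * (8 * R ^ 3 / r) ^ s * e ^ v) := by
        gcongr
        exact hb.trans (by gcongr)
    _ = _ := by ring

/-- There is a point `x` and a set `G` of positive measure all of whose thin tubes from `x` are light.
Starting from `X × Y`, pairs whose tube of width `e (j + J)` has measure at least `e (j + J) ^ t₁` are
removed for `j = 0, 1, …`. For `j < J` the lightness of tubes of width `e j` comes from `hbase`, for
`j ≥ J` from the earlier stage `j - J`. The total loss is at most `1 / 2`. -/
theorem exists_thin_fibre {μ ν : Measure Plane} [IsProbabilityMeasure μ]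
    [IsProbabilityMeasure ν] {X Y : Set Plane} (hX : MeasurableSet X) (hY : MeasurableSet Y)
    (hμY : μ Yᶜ = 0) (hνX : ν Xᶜ = 0) {r R : ℝ} (hr : 0 < r) (hR : 0 < R)
    (hXY : ∀ x ∈ X, ∀ y ∈ Y, r ≤ ‖y - x‖ ∧ ‖y - x‖ ≤ R)
    {s u Cμ Cν : ℝ} (hu : 0 < u) (hCμ : 0 < Cμ) (hCν : 0 < Cν)
    (hμ : ∀ x ρ, 0 < ρ → μ (closedBall x ρ) ≤ ENNReal.ofReal (Cμ * ρ ^ s))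
    (hν : ∀ x ρ, 0 < ρ → ν (closedBall x ρ) ≤ ENNReal.ofReal (Cν * ρ ^ u))
    (hbase : ∀ κ : ℝ, 0 < κ → ∃ ε > 0, ∀ x ∈ X, ∀ y ∈ Y,
      μ {z | z ∈ Y ∧ |det x y z| ≤ ε} ≤ ENNReal.ofReal κ)
    {t₀ t₁ : ℝ} (ht₀ : 0 < t₀) (ht₁ : t₀ < t₁) (hts : 2 * t₁ < s) :
    ∃ x ∈ X, ∃ G ⊆ Y, MeasurableSet G ∧ μ G ≠ 0 ∧ ∃ d₀ > 0, ∀ y ∈ G, ∀ d, 0 < d → d ≤ d₀ →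
      μ {z | z ∈ G ∧ |det x y z| ≤ d} ≤ ENNReal.ofReal (d ^ t₀) := by
  set β := t₁ / t₀ with hβdef
  have hβ : 1 < β := (one_lt_div ht₀).2 ht₁
  have hs2 : 0 < s - 2 * t₁ := by linarith
  -- `J` scales are needed to beat the factor `e ^ (- 2 * s)` in the `L²` estimate
  obtain ⟨J, hJ0, hJ⟩ : ∃ J : ℕ, 0 < J ∧ (2 * s + 1) / (s - 2 * t₁) ≤ β ^ J := by
    obtain ⟨n, hn⟩ := pow_unbounded_of_one_lt ((2 * s + 1) / (s - 2 * t₁)) hβ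
    exact ⟨n + 1, n.succ_pos, hn.le.trans (pow_le_pow_right₀ hβ.le n.le_succ)⟩
  have hJ0' : (0:ℝ) < J := by exact_mod_cast hJ0
  set v := min u (min t₁ 1) with hvdef
  have hv : 0 < v := lt_min hu (lt_min (ht₀.trans ht₁) one_pos)
  have hvu : v ≤ u := min_le_left _ _
  have hvt : v ≤ t₁ := (min_le_right _ _).trans (min_le_left _ _)
  have hv1 : v ≤ 1 := (min_le_right _ _).trans (min_le_right _ _)
  set C := Cν + Cμ * (8 * R ^ 3 / r) ^ s with hCdef
  have hC : 0 < C := by positivity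
  obtain ⟨ε₀, hε₀, hbase⟩ := hbase (1 / (16 * (J:ℝ) ^ 2)) (by positivity)
  obtain ⟨e, he, he1, heε, hes, heC, heh⟩ := exists_scales (β := β) (v := v) (C := 1 + C) hβ hv hε₀
  have hanti : ∀ i j, i ≤ j → e j ≤ e i := by
    intro i j hij
    induction j, hij using Nat.le_induction with
    | base => exact le_rfl
    | succ j _ ih =>
      rw [hes]
      refine le_trans ?_ ih
      calc e j ^ β ≤ e j ^ (1:ℝ) := Real.rpow_le_rpow_of_exponent_ge (he j) (he1 j).le hβ.le
        _ = e j := Real.rpow_one _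
  have heJ : ∀ j i, e (j + i) = e j ^ (β ^ i) := by
    intro j i
    induction i with
    | zero => simp
    | succ i ih => rw [← add_assoc, hes, ih, ← Real.rpow_mul (he j).le, pow_succ]
  have hδe : ∀ j, e (j + J) ^ (s - 2 * t₁) ≤ e j ^ (2 * s + 1) := by
    intro j
    rw [heJ, ← Real.rpow_mul (he j).le]
    apply Real.rpow_le_rpow_of_exponent_ge (he j) (he1 j).le
    rwa [div_le_iff₀ hs2] at hJ
  let G : ℕ → Set (Plane × Plane) := fun n => Nat.rec (X ×ˢ Y)
    (fun j G => {p | p ∈ G ∧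
      μ (tube G (e (j + J)) p.1 p.2) < ENNReal.ofReal (e (j + J) ^ t₁)}) n
  have hGs : ∀ j, G (j + 1) = {p | p ∈ G j ∧
      μ (tube (G j) (e (j + J)) p.1 p.2) < ENNReal.ofReal (e (j + J) ^ t₁)} := fun j => rfl
  have hGm : ∀ j, MeasurableSet (G j) := by
    intro j
    induction j with
    | zero => exact hX.prod hY
    | succ j ih =>
      rw [hGs]
      exact ih.inter (measurableSet_lt (measurable_measure_tube ih _ μ) measurable_const)
  have hGanti : ∀ i j, i ≤ j → G j ⊆ G i := by
    intro i j hij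
    induction j, hij using Nat.le_induction with
    | base => exact Subset.rfl
    | succ j _ ih => exact fun p hp => ih hp.1
  have hG0 : ∀ j, G j ⊆ X ×ˢ Y := fun j => hGanti 0 j (Nat.zero_le j)
  have hGr : ∀ j, ∀ p ∈ G j, r ≤ ‖p.2 - p.1‖ ∧ ‖p.2 - p.1‖ ≤ R := fun j p hp =>
    hXY _ (hG0 j hp).1 _ (hG0 j hp).2
  let b : ℕ → ℝ := fun j => (if j < J then 1 / (4 * (J:ℝ)) else 0) + 1 / 8 * (1 / 2) ^ j
  have hb0 : ∀ j, 0 ≤ b j := by intro j; simp only [b]; split_ifs <;> positivity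
  -- the choice `e j ^ t₁ + C * e j ^ v ≤ (1 + C) * e j ^ v ≤ (1 / 8 * (1 / 2) ^ j) ^ 2` of the scales
  -- makes the loss geometric for `j ≥ J`; the first `J` steps lose at most `1 / (4 * J)` more each
  have hloss : ∀ j, (ν.prod μ) (G j \ G (j + 1)) ≤ ENNReal.ofReal (b j) := by
    intro j
    have hsub : G j \ G (j + 1) ⊆
        {p | p ∈ G j ∧ ENNReal.ofReal (e (j + J) ^ t₁) ≤ μ (tube (G j) (e (j + J)) p.1 p.2)} := by
      rintro p ⟨h1, h2⟩
      refine ⟨h1, not_lt.1 fun h3 => h2 ⟨h1, h3⟩⟩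
    refine (measure_mono hsub).trans ?_
    have hsq : ((ν.prod μ) {p | p ∈ G j ∧
        ENNReal.ofReal (e (j + J) ^ t₁) ≤ μ (tube (G j) (e (j + J)) p.1 p.2)}) ^ 2 ≤
        ENNReal.ofReal (b j) ^ 2 := by
      rw [← ENNReal.ofReal_pow (hb0 j)]
      have hCe := heC j
      have hpow : ((1:ℝ) / 2) ^ j * (1 / 2) ^ j = (1 / 4) ^ j := by
        rw [← mul_pow]; norm_num
      have hvpos : 0 < e j ^ v := Real.rpow_pos_of_pos (he j) _
      by_cases hj : j < J
      · refine (measure_heavy_sq_le_of_scale (hGm j) hr hR (hGr j) hCμ hCν hμ hν hvu hv1 (he j)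
          (he1 j) (he (j + J)) (κ := 1 / (16 * (J:ℝ) ^ 2)) (by positivity) (hδe j) ?_).trans ?_
        · intro p hp
          refine (measure_mono fun z hz => ?_).trans (hbase _ (hG0 j hp).1 _ (hG0 j hp).2)
          exact ⟨(hG0 j hz.1).2, hz.2.trans (heε j)⟩
        · apply ENNReal.ofReal_le_ofReal
          simp only [b, if_pos hj]
          have h1 : (1 / (4 * (J:ℝ)) + 1 / 8 * (1 / 2) ^ j) ^ 2 = 1 / (16 * (J:ℝ) ^ 2) +
              2 * (1 / (4 * (J:ℝ))) * (1 / 8 * (1 / 2) ^ j) + 1 / 64 * (1 / 4) ^ j := by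
            rw [← hpow]; field_simp; ring
          have h2 : 0 ≤ 2 * (1 / (4 * (J:ℝ))) * (1 / 8 * (1 / 2) ^ j) := by positivity
          rw [h1]
          linarith
      · refine (measure_heavy_sq_le_of_scale (hGm j) hr hR (hGr j) hCμ hCν hμ hν hvu hv1 (he j)
          (he1 j) (he (j + J)) (κ := e j ^ t₁) (Real.rpow_nonneg (he j).le _) (hδe j) ?_).trans ?_
        · intro p hp
          have hjJ : j - J + J = j := by omega
          have h1 : p ∈ G (j - J + 1) := hGanti (j - J + 1) j (by omega) hp
          have h2 := h1.2.le
          rw [hjJ] at h2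
          refine (measure_mono fun z hz => ?_).trans h2
          exact ⟨hGanti (j - J) j (by omega) hz.1, hz.2⟩
        · apply ENNReal.ofReal_le_ofReal
          simp only [b, if_neg hj, zero_add]
          have h1 : (1 / 8 * (1 / 2 : ℝ) ^ j) ^ 2 = 1 / 64 * (1 / 4) ^ j := by
            rw [← hpow]; ring
          have h2 : e j ^ t₁ ≤ e j ^ v := Real.rpow_le_rpow_of_exponent_ge (he j) (he1 j).le hvt
          rw [h1]
          linarith
    exact (ENNReal.pow_le_pow_left_iff two_ne_zero).1 hsq
  have hsum : ∑' j, ENNReal.ofReal (b j) ≤ ENNReal.ofReal (1 / 2) := by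
    apply ENNReal.tsum_le_of_sum_range_le
    intro n
    rw [← ENNReal.ofReal_sum_of_nonneg fun j _ => hb0 j]
    apply ENNReal.ofReal_le_ofReal
    simp only [b, Finset.sum_add_distrib, ← Finset.mul_sum]
    have h1 : ∑ j ∈ Finset.range n, (if j < J then 1 / (4 * (J:ℝ)) else 0) ≤ 1 / 4 := by
      rw [← Finset.sum_filter, Finset.sum_const, nsmul_eq_mul]
      have hcard : ((Finset.range n).filter (· < J)).card ≤ J := by
        calc _ ≤ (Finset.range J).card := Finset.card_le_card fun j hj => by
              rw [Finset.mem_filter] at hj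
              exact Finset.mem_range.2 hj.2
          _ = J := Finset.card_range J
      calc _ ≤ (J:ℝ) * (1 / (4 * (J:ℝ))) := by gcongr
        _ = 1 / 4 := by field_simp
    have h2 : ∑ j ∈ Finset.range n, (1 / 2 : ℝ) ^ j ≤ 2 := by
      have := Summable.sum_le_tsum (Finset.range n) (fun j _ => by positivity)
        summable_geometric_two
      rwa [tsum_geometric_two] at this
    linarith
  have hinf : (ν.prod μ) (⋂ j, G j) ≠ 0 := by
    intro h0
    have h1 : X ×ˢ Y ⊆ (⋂ j, G j) ∪ ⋃ j, G j \ G (j + 1) := by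
      intro p hp
      refine or_iff_not_imp_right.2 fun hcon => mem_iInter.2 fun j => ?_
      induction j with
      | zero => exact hp
      | succ j ih =>
        by_contra hnot
        exact hcon (mem_iUnion.2 ⟨j, ih, hnot⟩)
    have h2 : (ν.prod μ) (X ×ˢ Y) = 1 := by
      rw [Measure.prod_prod, (prob_compl_eq_zero_iff hX).1 hνX, (prob_compl_eq_zero_iff hY).1 hμY,
        one_mul]
    have h3 : (1 : ℝ≥0∞) ≤ ENNReal.ofReal (1 / 2) := by
      calc (1 : ℝ≥0∞) = (ν.prod μ) (X ×ˢ Y) := h2.symm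
        _ ≤ _ := measure_mono h1
        _ ≤ _ := measure_union_le _ _
        _ = (ν.prod μ) (⋃ j, G j \ G (j + 1)) := by rw [h0, zero_add]
        _ ≤ _ := measure_iUnion_le _
        _ ≤ _ := ENNReal.tsum_le_tsum hloss
        _ ≤ _ := hsum
    rw [← ENNReal.ofReal_one, ENNReal.ofReal_le_ofReal_iff (by norm_num)] at h3
    norm_num at h3
  have hinfm : MeasurableSet (⋂ j, G j) := MeasurableSet.iInter hGm
  obtain ⟨x, hx⟩ : ∃ x, μ (Prod.mk x ⁻¹' ⋂ j, G j) ≠ 0 := by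
    by_contra! hcon
    apply hinf
    rw [Measure.prod_apply hinfm]
    simp [hcon]
  have hmem : ∀ y ∈ Prod.mk x ⁻¹' ⋂ j, G j, ∀ j, (x, y) ∈ G j := fun y hy j => mem_iInter.1 hy j
  obtain ⟨y₀, hy₀⟩ := nonempty_of_measure_ne_zero hx
  refine ⟨x, (hmem y₀ hy₀ 0).1, Prod.mk x ⁻¹' ⋂ j, G j, fun y hy => (hmem y hy 0).2,
    measurable_prodMk_left hinfm, hx, e J, he J, fun y hy d hd hdJ => ?_⟩
  -- `d` lies between consecutive scales; passing to the larger one costs the exponent `β = t₁ / t₀`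
  have hex : ∃ j, e j < d := by
    obtain ⟨n, hn⟩ := exists_pow_lt_of_lt_one hd (by norm_num : (1/2 : ℝ) < 1)
    exact ⟨n, (heh n).trans_lt hn⟩
  obtain ⟨k, hk, hkmin⟩ : ∃ k, e k < d ∧ ∀ i < k, d ≤ e i := by
    classical
    exact ⟨Nat.find hex, Nat.find_spec hex, fun i hi => not_lt.1 (Nat.find_min hex hi)⟩
  have hJk : J < k := by
    by_contra hcon
    exact absurd (hdJ.trans (hanti k J (not_lt.1 hcon))) (not_le.2 hk)
  obtain ⟨i, rfl⟩ : ∃ i, k = i + J + 1 := ⟨k - J - 1, by omega⟩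
  have h1 : (x, y) ∈ G (i + 1) := hmem y hy (i + 1)
  calc μ {z | z ∈ Prod.mk x ⁻¹' ⋂ j, G j ∧ |det x y z| ≤ d}
      ≤ μ (tube (G i) (e (i + J)) x y) :=
        measure_mono fun z hz => ⟨hmem z hz.1 i, hz.2.trans (hkmin _ (by omega))⟩
    _ ≤ ENNReal.ofReal (e (i + J) ^ t₁) := h1.2.le
    _ = ENNReal.ofReal (e (i + J + 1) ^ t₀) := by
      rw [hes, ← Real.rpow_mul (he _).le, hβdef, div_mul_cancel₀ _ ht₀.ne']
    _ ≤ _ := by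
      apply ENNReal.ofReal_le_ofReal
      exact Real.rpow_le_rpow (he _).le hk.le ht₀.le

/-! ### Null sets and radial projections -/

/-- A plane set is `t`-null if it has open covers with arbitrarily small `∑ diam ^ t`. Open covers
make this condition stable under small perturbations of a compact set. -/
def Null (t : ℝ) (S : Set Plane) : Prop :=
  ∀ ε : ℝ≥0∞, 0 < ε → ∃ U : ℕ → Set Plane, (∀ i, IsOpen (U i)) ∧ S ⊆ ⋃ i, U i ∧
    ∑' i, ediam (U i) ^ t < ε

lemma Null.mono {t : ℝ} {S T : Set Plane} (h : Null t T) (hST : S ⊆ T) : Null t S := by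
  intro ε hε
  obtain ⟨U, h1, h2, h3⟩ := h ε hε
  exact ⟨U, h1, hST.trans h2, h3⟩

/-- A set of dimension less than `t` has covers with small `∑ diam ^ t`, whose members can be thickened to
open sets. -/
lemma null_of_dimH_lt {t : ℝ} (ht : 0 < t) {S : Set Plane} (h : dimH S < ENNReal.ofReal t) :
    Null t S := by
  have hμ : Measure.hausdorffMeasure t S = 0 := by
    have := hausdorffMeasure_of_dimH_lt (d := t.toNNReal) h
    rwa [Real.coe_toNNReal t ht.le] at this
  intro ε hε
  rw [Measure.hausdorffMeasure_apply] at hμ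
  have h1 : (⨅ (T : ℕ → Set Plane) (_ : S ⊆ ⋃ n, T n) (_ : ∀ n, ediam (T n) ≤ 1),
      ∑' n, ⨆ _ : (T n).Nonempty, ediam (T n) ^ t) < ε / 2 := by
    refine lt_of_le_of_lt ?_ (ENNReal.half_pos hε.ne')
    rw [← hμ]
    exact le_iSup₂_of_le (1 : ℝ≥0∞) one_pos le_rfl
  simp only [iInf_lt_iff] at h1
  obtain ⟨T, hST, hT1, hsum⟩ := h1
  have hsum' : ∑' n, ediam (T n) ^ t < ε / 2 := by
    refine lt_of_le_of_lt (ENNReal.tsum_le_tsum fun n => ?_) hsum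
    rcases (T n).eq_empty_or_nonempty with h0 | h0
    · simp [h0, ht]
    · exact le_iSup (fun _ : (T n).Nonempty => ediam (T n) ^ t) h0
  obtain ⟨δ, hδ, hδsum⟩ := ENNReal.exists_pos_sum_of_countable (ENNReal.half_pos hε.ne').ne' ℕ
  -- thicken each covering set, paying at most `δ n`
  have hη : ∀ n, ∃ η : ℝ≥0, 0 < η ∧ (ediam (T n) + 2 * η) ^ t < ediam (T n) ^ t + δ n := by
    intro n
    have hfin : ediam (T n) ^ t ≠ ∞ :=
      ENNReal.rpow_ne_top_of_nonneg ht.le (ne_top_of_le_ne_top ENNReal.one_ne_top (hT1 n))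
    have hlt : ediam (T n) ^ t < ediam (T n) ^ t + δ n :=
      ENNReal.lt_add_right hfin (by simpa using (hδ n).ne')
    have hc : Tendsto (fun η : ℝ≥0 => (ediam (T n) + 2 * (η : ℝ≥0∞)) ^ t) (𝓝 0)
        (𝓝 (ediam (T n) ^ t)) := by
      have h2 : Tendsto (fun η : ℝ≥0 => ediam (T n) + 2 * (η : ℝ≥0∞)) (𝓝 0)
          (𝓝 (ediam (T n) + 2 * ((0 : ℝ≥0) : ℝ≥0∞))) := by
        refine tendsto_const_nhds.add ?_
        exact ENNReal.Tendsto.const_mul (ENNReal.tendsto_coe.2 tendsto_id) (Or.inr (by simp))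
      simp only [ENNReal.coe_zero, mul_zero, add_zero] at h2
      exact ((ENNReal.continuous_rpow_const (y := t)).tendsto _).comp h2
    have h3 : ∀ᶠ η : ℝ≥0 in 𝓝[>] 0, (ediam (T n) + 2 * (η : ℝ≥0∞)) ^ t < ediam (T n) ^ t + δ n :=
      nhdsWithin_le_nhds (hc.eventually_lt_const hlt)
    obtain ⟨η, hη1, hη2⟩ := (h3.and eventually_mem_nhdsWithin).exists
    exact ⟨η, hη2, hη1⟩
  choose η hη0 hη using hη
  refine ⟨fun n => thickening (η n) (T n), fun n => isOpen_thickening, ?_, ?_⟩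
  · exact hST.trans (iUnion_mono fun n => self_subset_thickening (by exact_mod_cast hη0 n) _)
  · calc ∑' n, ediam (thickening (η n : ℝ) (T n)) ^ t
        ≤ ∑' n, (ediam (T n) ^ t + δ n) := ENNReal.tsum_le_tsum fun n =>
          (ENNReal.rpow_le_rpow (ediam_thickening_le _) ht.le).trans (hη n).le
      _ = ∑' n, ediam (T n) ^ t + ∑' n, (δ n : ℝ≥0∞) := ENNReal.tsum_add
      _ < ε / 2 + ε / 2 := ENNReal.add_lt_add hsum' hδsum
      _ = ε := ENNReal.add_halves ε

/-- The mass distribution principle for the push-forward of `μ` restricted to `G`. -/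
lemma not_null {μ : Measure Plane} {F : Plane → Plane} {G : Set Plane} (hG : μ G ≠ 0) {t d₀ C : ℝ}
    (ht : 0 < t) (hd₀ : 0 < d₀) (hC : 0 < C)
    (h : ∀ y ∈ G, ∀ d, 0 < d → d ≤ d₀ →
      μ {z | z ∈ G ∧ ‖F z - F y‖ ≤ d} ≤ ENNReal.ofReal (C * d ^ t)) : ¬ Null t (F '' G) := by
  intro hN
  set m : ℝ≥0∞ := min (μ G / ENNReal.ofReal C) (ENNReal.ofReal (d₀ ^ t)) with hm
  have hCpos : ENNReal.ofReal C ≠ 0 := by simpa using hC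
  have hm0 : 0 < m :=
    lt_min (ENNReal.div_pos hG ENNReal.ofReal_ne_top) (ENNReal.ofReal_pos.2 (by positivity))
  obtain ⟨U, hU, hGU, hsum⟩ := hN m hm0
  have hbound : ∀ i, μ {z | z ∈ G ∧ F z ∈ U i} ≤ ENNReal.ofReal C * ediam (U i) ^ t := by
    intro i
    rcases ({z | z ∈ G ∧ F z ∈ U i}).eq_empty_or_nonempty with h0 | ⟨y, hy, hyU⟩
    · simp [h0]
    -- a nonempty open subset of the plane is not a singleton
    have hpos : 0 < ediam (U i) := by
      rw [ediam_pos_iff]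
      by_contra hcon
      rw [Set.not_nontrivial_iff] at hcon
      exact (infinite_of_mem_nhds (F y) ((hU i).mem_nhds hyU)) hcon.finite
    have hlt : ediam (U i) ^ t < ENNReal.ofReal (d₀ ^ t) :=
      ((ENNReal.le_tsum i).trans_lt hsum).trans_le (min_le_right _ _)
    rw [← ENNReal.ofReal_rpow_of_pos hd₀, ENNReal.rpow_lt_rpow_iff ht] at hlt
    have hne : ediam (U i) ≠ ∞ := (hlt.trans ENNReal.ofReal_lt_top).ne
    have hd : 0 < (ediam (U i)).toReal := ENNReal.toReal_pos hpos.ne' hne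
    have hle : (ediam (U i)).toReal ≤ d₀ := by
      rw [← ENNReal.toReal_ofReal hd₀.le]
      exact ENNReal.toReal_mono ENNReal.ofReal_ne_top hlt.le
    refine (measure_mono ?_).trans ((h y hy _ hd hle).trans ?_)
    · rintro z ⟨hz, hzU⟩
      refine ⟨hz, ?_⟩
      rw [← dist_eq_norm, dist_edist]
      exact ENNReal.toReal_mono hne (edist_le_ediam_of_mem hzU hyU)
    · rw [ENNReal.ofReal_mul hC.le, ← ENNReal.ofReal_rpow_of_pos hd, ENNReal.ofReal_toReal hne]
  have : μ G < μ G := by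
    calc μ G ≤ μ (⋃ i, {z | z ∈ G ∧ F z ∈ U i}) := measure_mono fun z hz => by
          obtain ⟨i, hi⟩ := mem_iUnion.1 (hGU (mem_image_of_mem F hz))
          exact mem_iUnion.2 ⟨i, hz, hi⟩
      _ ≤ ∑' i, μ {z | z ∈ G ∧ F z ∈ U i} := measure_iUnion_le _
      _ ≤ ∑' i, ENNReal.ofReal C * ediam (U i) ^ t := ENNReal.tsum_le_tsum hbound
      _ = ENNReal.ofReal C * ∑' i, ediam (U i) ^ t := ENNReal.tsum_mul_left
      _ < ENNReal.ofReal C * m := ENNReal.mul_lt_mul_right hCpos ENNReal.ofReal_ne_top hsum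
      _ ≤ ENNReal.ofReal C * (μ G / ENNReal.ofReal C) := by gcongr; exact min_le_left _ _
      _ ≤ μ G := ENNReal.mul_div_le
  exact this.false

lemma continuousAt_dir {x y : Plane} (h : x ≠ y) :
    ContinuousAt (fun p : Plane × Plane => dir p.1 p.2) (x, y) := by
  have h1 : ContinuousAt (fun p : Plane × Plane => p.2 - p.1) (x, y) := by fun_prop
  exact (h1.norm.inv₀ (by simpa [sub_eq_zero] using h.symm)).smul h1

/-- For compact `Y`, nullity of the radial projection of `Y` is a `G_δ` condition on the centre. -/
lemma measurableSet_null {Y : Set Plane} (hY : IsCompact Y) (t : ℝ) :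
    MeasurableSet {x | x ∉ Y ∧ Null t (dir x '' Y)} := by
  -- a cover of `dir x '' Y` by fixed open sets also covers `dir x' '' Y` for `x'` near `x`
  have heq : {x | x ∉ Y ∧ Null t (dir x '' Y)} = ⋂ n : ℕ, {x | x ∉ Y ∧ ∃ U : ℕ → Set Plane,
      (∀ i, IsOpen (U i)) ∧ dir x '' Y ⊆ ⋃ i, U i ∧ ∑' i, ediam (U i) ^ t < ((n : ℝ≥0∞) + 1)⁻¹} := by
    ext x
    simp only [mem_ofPred_eq, mem_iInter]
    constructor
    · rintro ⟨hx, hN⟩ n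
      exact ⟨hx, hN _ (by simp)⟩
    · intro h
      refine ⟨(h 0).1, fun ε hε => ?_⟩
      obtain ⟨n, hn⟩ := ENNReal.exists_inv_nat_lt hε.ne'
      obtain ⟨-, U, h1, h2, h3⟩ := h n
      exact ⟨U, h1, h2, h3.trans ((ENNReal.inv_le_inv.2 le_self_add).trans_lt hn)⟩
  rw [heq]
  refine MeasurableSet.iInter fun n => IsOpen.measurableSet ?_
  rw [isOpen_iff_eventually]
  rintro x ⟨hx, U, h1, h2, h3⟩
  have hO : IsOpen (⋃ i, U i) := isOpen_iUnion h1
  have e1 : ∀ᶠ x' in 𝓝 x, x' ∉ Y := hY.isClosed.isOpen_compl.mem_nhds hx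
  have e2 : ∀ᶠ x' in 𝓝 x, ∀ y ∈ Y, dir x' y ∈ ⋃ i, U i := by
    refine hY.eventually_forall_of_forall_eventually fun y hy => ?_
    have hne : x ≠ y := fun h => hx (h ▸ hy)
    exact (continuousAt_dir hne).eventually (hO.mem_nhds (h2 (mem_image_of_mem _ hy)))
  filter_upwards [e1, e2] with x' hx' hU'
  exact ⟨hx', U, h1, by rintro _ ⟨y, hy, rfl⟩; exact hU' y hy, h3⟩

lemma collinear_of_det_eq_zero {x y z : Plane} (hxy : x ≠ y) (h : det x y z = 0) :
    ∃ t : ℝ, z = x + t • (y - x) := by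
  have hn : ‖y - x‖ ^ 2 ≠ 0 := by
    have : ‖y - x‖ ≠ 0 := by simpa [sub_eq_zero] using hxy.symm
    positivity
  refine ⟨((y - x) 0 * (z - x) 0 + (y - x) 1 * (z - x) 1) / ‖y - x‖ ^ 2, ?_⟩
  simp only [det, cr] at h
  rw [normSq_eq] at hn ⊢
  ext i
  simp only [PiLp.sub_apply, PiLp.add_apply, PiLp.smul_apply, smul_eq_mul] at *
  fin_cases i
  · simp only [Fin.zero_eta, Fin.isValue]
    field_simp
    linear_combination (-(y 1 - x 1)) * h
  · simp only [Fin.mk_one, Fin.isValue]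
    field_simp
    linear_combination ((y 0 - x 0)) * h

/-! ### The exceptional set -/

/-- If some line has positive Frostman measure, every exceptional centre lies on it: from any other centre
the radial projection is bi-Lipschitz on a bounded part of the line. -/
lemma line_case {A K : Set Plane} {μ : Measure Plane} {s C : ℝ} (hs : 0 < s) (hKA : K ⊆ A)
    (hK : IsCompact K) (hC : 0 < C)
    (hμ : ∀ x r, 0 < r → μ (closedBall x r) ≤ ENNReal.ofReal (C * r ^ s)) {x₀ y₀ : Plane}
    (hne : x₀ ≠ y₀) (hpos : μ (K ∩ {z | det x₀ y₀ z = 0}) ≠ 0) {x : Plane}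
    (hx : dimH (dir x '' (A \ {x})) < ENNReal.ofReal s) : ∃ t : ℝ, x = x₀ + t • (y₀ - x₀) := by
  by_contra hcon
  have hD : det x₀ y₀ x ≠ 0 := fun h => hcon (collinear_of_det_eq_zero hne h)
  have hD' : 0 < |det x₀ y₀ x| := abs_pos.2 hD
  have hv : 0 < ‖y₀ - x₀‖ := by
    rw [norm_pos_iff, sub_ne_zero]; exact hne.symm
  obtain ⟨R, hR, hKR⟩ : ∃ R : ℝ, 0 < R ∧ ∀ y ∈ K, ‖y - x‖ ≤ R := by
    obtain ⟨R, hR, h⟩ := hK.isBounded.subset_closedBall_lt 0 x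
    exact ⟨R, hR, fun y hy => by simpa [dist_eq_norm] using h hy⟩
  have key : ∀ y ∈ K ∩ {z | det x₀ y₀ z = 0}, ∀ z ∈ K ∩ {z | det x₀ y₀ z = 0},
      ‖z - y‖ * |det x₀ y₀ x| ≤ ‖y₀ - x₀‖ * R ^ 2 * ‖dir x z - dir x y‖ := by
    rintro y ⟨hyK, hy⟩ z ⟨hzK, hz⟩
    have h1 := abs_det_le_dir x y z
    have h2 : ‖y - x‖ * ‖z - x‖ ≤ R ^ 2 := by
      rw [sq]
      exact mul_le_mul (hKR y hyK) (hKR z hzK) (norm_nonneg _) hR.le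
    have h3 : ‖z - y‖ * |det x₀ y₀ x| = ‖y₀ - x₀‖ * |det x y z| := by
      obtain ⟨a, rfl⟩ := collinear_of_det_eq_zero hne hy
      obtain ⟨b, rfl⟩ := collinear_of_det_eq_zero hne hz
      have e1 : x₀ + b • (y₀ - x₀) - (x₀ + a • (y₀ - x₀)) = (b - a) • (y₀ - x₀) := by
        rw [sub_smul]; abel
      have e2 : det x (x₀ + a • (y₀ - x₀)) (x₀ + b • (y₀ - x₀)) = (b - a) * det x₀ y₀ x := by
        simp only [det, cr, PiLp.sub_apply, PiLp.add_apply, PiLp.smul_apply, smul_eq_mul]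
        ring
      rw [e1, e2, norm_smul, abs_mul, Real.norm_eq_abs]
      ring
    rw [h3, mul_assoc]
    gcongr
    exact h1.trans (by gcongr)
  have hnull : Null s (dir x '' (A \ {x})) := null_of_dimH_lt hs hx
  refine not_null (C := C * (‖y₀ - x₀‖ * R ^ 2 / |det x₀ y₀ x|) ^ s) (d₀ := 1) hpos hs one_pos
    (by positivity) ?_ (hnull.mono (image_mono ?_))
  · intro y hy d hd _
    have hsub : {z | z ∈ K ∩ {z | det x₀ y₀ z = 0} ∧ ‖dir x z - dir x y‖ ≤ d} ⊆
        closedBall y (‖y₀ - x₀‖ * R ^ 2 / |det x₀ y₀ x| * d) := by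
      rintro z ⟨hz, hzd⟩
      rw [mem_closedBall, dist_eq_norm, div_mul_eq_mul_div, le_div_iff₀ hD']
      exact (key y hy z hz).trans (by gcongr)
    refine (measure_mono hsub).trans ((hμ _ _ (by positivity)).trans_eq ?_)
    rw [Real.mul_rpow (by positivity) hd.le, mul_assoc]
  · rintro z ⟨hzK, hz⟩
    refine ⟨hKA hzK, ?_⟩
    rintro rfl
    exact hD hz

/-- If no line through points of `X` and `Y` has positive measure, then thin tubes are uniformly light, by
compactness of `X × Y`. -/
lemma exists_base {μ : Measure Plane} [IsFiniteMeasure μ] {X Y : Set Plane} (hX : IsCompact X)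
    (hY : IsCompact Y) (h0 : ∀ x ∈ X, ∀ y ∈ Y, μ (Y ∩ {z | det x y z = 0}) = 0) {κ : ℝ}
    (hκ : 0 < κ) : ∃ ε > 0, ∀ x ∈ X, ∀ y ∈ Y,
      μ {z | z ∈ Y ∧ |det x y z| ≤ ε} ≤ ENNReal.ofReal κ := by
  have hloc : ∀ p ∈ X ×ˢ Y, ∃ S ∈ 𝓝[X ×ˢ Y] p, ∃ ε > 0, ∀ q ∈ S,
      μ {z | z ∈ Y ∧ |det q.1 q.2 z| ≤ ε} ≤ ENNReal.ofReal κ := by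
    rintro ⟨x, y⟩ ⟨hx, hy⟩
    -- continuity from above along the strips shrinking to the line through `x` and `y`
    have hcont : ∃ η > 0, μ {z | z ∈ Y ∧ |det x y z| ≤ η} ≤ ENNReal.ofReal κ := by
      have hmeas : ∀ η : ℝ, MeasurableSet {z | z ∈ Y ∧ |det x y z| ≤ η} := fun η =>
        hY.measurableSet.inter (measurableSet_le
          (measurable_det_comp measurable_const measurable_const measurable_id).abs measurable_const)
      have hT := tendsto_measure_iInter_atTop (μ := μ)
        (s := fun n : ℕ => {z | z ∈ Y ∧ |det x y z| ≤ 1 / ((n : ℝ) + 1)})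
        (fun n => (hmeas _).nullMeasurableSet)
        (fun m n hmn z hz => ⟨hz.1, hz.2.trans (one_div_le_one_div_of_le (by positivity)
          (by gcongr))⟩) ⟨0, measure_ne_top _ _⟩
      have hI : (⋂ n : ℕ, {z | z ∈ Y ∧ |det x y z| ≤ 1 / ((n : ℝ) + 1)}) ⊆
          Y ∩ {z | det x y z = 0} := by
        intro z hz
        rw [mem_iInter] at hz
        refine ⟨(hz 0).1, abs_nonpos_iff.1 ?_⟩
        exact ge_of_tendsto' tendsto_one_div_add_atTop_nhds_zero_nat fun n => (hz n).2
      rw [measure_mono_null hI (h0 x hx y hy)] at hT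
      obtain ⟨n, hn⟩ := (hT.eventually_lt_const (ENNReal.ofReal_pos.2 hκ)).exists
      exact ⟨_, by positivity, hn.le⟩
    obtain ⟨η, hη, hηκ⟩ := hcont
    have hev : ∀ᶠ q : Plane × Plane in 𝓝 (x, y), ∀ z ∈ Y, |det q.1 q.2 z - det x y z| < η / 2 := by
      refine hY.eventually_forall_of_forall_eventually fun z hz => ?_
      have hc : Continuous fun w : (Plane × Plane) × Plane =>
          |det w.1.1 w.1.2 w.2 - det x y w.2| := by
        simp only [det, cr]
        fun_prop
      refine (hc.tendsto ((x, y), z)).eventually_lt_const ?_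
      simpa using hη
    refine ⟨_, nhdsWithin_le_nhds hev, η / 2, by positivity, fun q hq => ?_⟩
    refine (measure_mono ?_).trans hηκ
    rintro z ⟨hz, hzd⟩
    refine ⟨hz, ?_⟩
    have := abs_lt.1 (hq z hz)
    have := abs_le.1 hzd
    rw [abs_le]
    constructor <;> linarith
  have := (hX.prod hY).induction_on (p := fun S => ∃ ε > 0, ∀ q ∈ S,
      μ {z | z ∈ Y ∧ |det q.1 q.2 z| ≤ ε} ≤ ENNReal.ofReal κ) ⟨1, one_pos, by simp⟩
    (fun S T hST ⟨ε, hε, h⟩ => ⟨ε, hε, fun q hq => h q (hST hq)⟩)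
    (by
      rintro S T ⟨ε, hε, h⟩ ⟨ε', hε', h'⟩
      refine ⟨min ε ε', lt_min hε hε', ?_⟩
      rintro q (hq | hq)
      · exact (measure_mono fun z (hz : z ∈ Y ∧ _) =>
          (⟨hz.1, hz.2.trans (min_le_left _ _)⟩ : z ∈ Y ∧ |det q.1 q.2 z| ≤ ε)).trans (h q hq)
      · exact (measure_mono fun z (hz : z ∈ Y ∧ _) =>
          (⟨hz.1, hz.2.trans (min_le_right _ _)⟩ : z ∈ Y ∧ |det q.1 q.2 z| ≤ ε')).trans (h' q hq))
    hloc
  obtain ⟨ε, hε, h⟩ := this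
  exact ⟨ε, hε, fun x hx y hy => h (x, y) ⟨hx, hy⟩⟩

/-- If a Frostman measure of exponent `s` gives no mass to lines, then the centres from which the radial
projection has dimension less than `t₀ < s / 2` form a set of dimension `0`. -/
lemma dimH_exceptional_eq_zero {A K : Set Plane} {μ : Measure Plane} [IsProbabilityMeasure μ]
    {s C : ℝ} (hs : 0 < s) (hKA : K ⊆ A) (hK : IsCompact K) (hμK : μ Kᶜ = 0) (hC : 0 < C)
    (hμ : ∀ x r, 0 < r → μ (closedBall x r) ≤ ENNReal.ofReal (C * r ^ s))
    (hline : ∀ x y, x ≠ y → μ (K ∩ {z | det x y z = 0}) = 0) {t₀ : ℝ} (ht₀ : 0 < t₀)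
    (hts : 2 * t₀ < s) : dimH {x | dimH (dir x '' (A \ {x})) < ENNReal.ofReal t₀} = 0 := by
  by_contra hcon
  set E := {x | dimH (dir x '' (A \ {x})) < ENNReal.ofReal t₀} with hE
  obtain ⟨u', hu'0, hu'⟩ := exists_between (pos_iff_ne_zero.2 hcon)
  obtain ⟨u, hu, rfl⟩ : ∃ u : ℝ, 0 < u ∧ u' = ENNReal.ofReal u :=
    ⟨u'.toReal, ENNReal.toReal_pos hu'0.ne' hu'.ne_top, (ENNReal.ofReal_toReal hu'.ne_top).symm⟩
  obtain ⟨x₀, hx₀, hloc⟩ := exists_mem_nhdsWithin_lt_dimH_of_lt_dimH hu'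
  -- centres near `x₀` have positive dimension; `r` is so small that `K` has mass outside `ball x₀ (2 * r)`
  obtain ⟨r, hr, hrC⟩ : ∃ r : ℝ, 0 < r ∧ C * (2 * r) ^ s < 1 := by
    have h1 : Tendsto (fun r : ℝ => C * (2 * r) ^ s) (𝓝 0) (𝓝 (C * (2 * 0) ^ s)) :=
      (continuous_const.mul ((continuous_const.mul continuous_id).rpow_const
        (fun _ => Or.inr hs.le))).tendsto 0
    rw [mul_zero, Real.zero_rpow hs.ne', mul_zero] at h1
    have h2 : ∀ᶠ r : ℝ in 𝓝[>] 0, C * (2 * r) ^ s < 1 :=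
      nhdsWithin_le_nhds (h1.eventually_lt_const one_pos)
    obtain ⟨r, h3, h4⟩ := (h2.and eventually_mem_nhdsWithin).exists
    exact ⟨r, h4, h3⟩
  set Y := K \ ball x₀ (2 * r) with hYdef
  have hY : IsCompact Y := hK.diff isOpen_ball
  have hYK : Y ⊆ K := sdiff_subset
  have hμY : μ Y ≠ 0 := by
    intro h
    have hfull : μ univ ≤ μ Kᶜ + (μ (closedBall x₀ (2 * r)) + μ Y) := by
      refine (measure_mono ?_).trans ((measure_union_le _ _).trans
        (add_le_add le_rfl (measure_union_le _ _)))
      intro z _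
      by_cases hz : z ∈ K
      · by_cases hz' : z ∈ ball x₀ (2 * r)
        · exact Or.inr (Or.inl (ball_subset_closedBall hz'))
        · exact Or.inr (Or.inr ⟨hz, hz'⟩)
      · exact Or.inl hz
    rw [measure_univ, hμK, h, zero_add, add_zero] at hfull
    have := hfull.trans (hμ x₀ (2 * r) (by positivity))
    rw [ENNReal.one_le_ofReal] at this
    linarith
  have hμY' : 0 < (μ Y).toReal := ENNReal.toReal_pos hμY (measure_ne_top _ _)
  -- Borel measurability of the set of centres is needed for Frostman's lemma
  set B := closedBall x₀ r ∩ {x | x ∉ Y ∧ Null t₀ (dir x '' Y)} with hB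
  have hBmeas : MeasurableSet B := measurableSet_closedBall.inter (measurableSet_null hY t₀)
  have hfar : ∀ x ∈ closedBall x₀ r, ∀ y ∈ Y, r ≤ ‖y - x‖ := by
    intro x hx y hy
    have h1 : 2 * r ≤ dist y x₀ := by simpa using hy.2
    have h2 : dist x x₀ ≤ r := hx
    rw [← dist_eq_norm]
    linarith [dist_triangle y x x₀]
  have hBdim : ENNReal.ofReal u < dimH B := by
    have h1 : E ∩ closedBall x₀ r ∈ 𝓝[E] x₀ :=
      inter_mem self_mem_nhdsWithin (nhdsWithin_le_nhds (closedBall_mem_nhds _ hr))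
    refine (hloc _ h1).trans_le (dimH_mono ?_)
    rintro x ⟨hxE, hx⟩
    have hxY : x ∉ Y := fun h => by simpa [hr.not_ge] using hfar x hx x h
    refine ⟨hx, hxY, (null_of_dimH_lt ht₀ hxE).mono (image_mono ?_)⟩
    intro y hy
    exact ⟨hKA (hYK hy), fun h => hxY (h ▸ hy)⟩
  obtain ⟨X, hXB, hX, ν, hν, hνX, Cν, hCν, hνC⟩ := exists_frostman hBmeas hu hBdim
  set μ' : Measure Plane := (μ Y)⁻¹ • μ.restrict Y with hμ'
  have hprob : IsProbabilityMeasure μ' := ⟨by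
    rw [hμ', Measure.smul_apply, Measure.restrict_apply_univ, smul_eq_mul,
      ENNReal.inv_mul_cancel hμY (measure_ne_top _ _)]⟩
  have hμ'Y : μ' Yᶜ = 0 := by
    rw [hμ', Measure.smul_apply, Measure.restrict_apply hY.measurableSet.compl]
    simp
  have hμ'le : ∀ S, μ' S ≤ (μ Y)⁻¹ * μ S := by
    intro S
    rw [hμ', Measure.smul_apply, smul_eq_mul]
    exact mul_le_mul_right (Measure.restrict_apply_le _ _) _
  have hμ'C : ∀ x ρ, 0 < ρ → μ' (closedBall x ρ) ≤ ENNReal.ofReal (C / (μ Y).toReal * ρ ^ s) := by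
    intro x ρ hρ
    refine (hμ'le _).trans ?_
    rw [div_mul_eq_mul_div, ENNReal.ofReal_div_of_pos hμY', ENNReal.ofReal_toReal
      (measure_ne_top _ _), ENNReal.div_eq_inv_mul]
    gcongr
    exact hμ x ρ hρ
  obtain ⟨R, hR, hYR⟩ : ∃ R : ℝ, 0 < R ∧ ∀ x ∈ closedBall x₀ r, ∀ y ∈ Y, ‖y - x‖ ≤ R := by
    obtain ⟨R, hR, h⟩ := hK.isBounded.subset_closedBall_lt 0 x₀
    refine ⟨R + r, by positivity, fun x hx y hy => ?_⟩
    have h1 : dist y x₀ ≤ R := h (hYK hy)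
    have h2 : dist x x₀ ≤ r := hx
    rw [← dist_eq_norm]
    linarith [dist_triangle_right y x x₀]
  have hXball : X ⊆ closedBall x₀ r := fun x hx => (hXB hx).1
  have hXY : ∀ x ∈ X, ∀ y ∈ Y, r ≤ ‖y - x‖ ∧ ‖y - x‖ ≤ R := fun x hx y hy =>
    ⟨hfar x (hXball hx) y hy, hYR x (hXball hx) y hy⟩
  have hbase : ∀ κ : ℝ, 0 < κ → ∃ ε > 0, ∀ x ∈ X, ∀ y ∈ Y,
      μ' {z | z ∈ Y ∧ |det x y z| ≤ ε} ≤ ENNReal.ofReal κ := by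
    intro κ hκ
    refine exists_base hX hY (fun x hx y hy => ?_) hκ
    have hxy : x ≠ y := fun h => (hXB hx).2.1 (h ▸ hy)
    have h1 : μ (Y ∩ {z | det x y z = 0}) = 0 :=
      measure_mono_null (inter_subset_inter_left _ hYK) (hline x y hxy)
    exact le_antisymm ((hμ'le _).trans (by rw [h1, mul_zero])) zero_le
  obtain ⟨t₁, ht₁, ht₁'⟩ := exists_between (show t₀ < s / 2 by linarith)
  obtain ⟨x, hx, G, hGY, hG, hG0, d₀, hd₀, hGd⟩ := exists_thin_fibre hX.measurableSet
    hY.measurableSet hμ'Y hνX hr hR hXY hu (div_pos hC hμY') hCν hμ'C hνC hbase ht₀ ht₁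
    (by linarith)
  refine not_null (μ := μ') (F := dir x) (d₀ := d₀ / R ^ 2) (C := (R ^ 2) ^ t₀) hG0 ht₀
    (by positivity) (by positivity) ?_ ((hXB hx).2.2.mono (image_mono hGY))
  intro y hy d hd hdd
  have hRd : R ^ 2 * d ≤ d₀ := by
    rw [le_div_iff₀ (by positivity)] at hdd
    linarith
  rw [← Real.mul_rpow (by positivity) hd.le]
  refine (measure_mono ?_).trans (hGd y hy (R ^ 2 * d) (by positivity) hRd)
  rintro z ⟨hz, hzd⟩
  refine ⟨hz, (abs_det_le_dir x y z).trans ?_⟩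
  have h1 := (hXY x hx y (hGY hy)).2
  have h2 := (hXY x hx z (hGY hz)).2
  have h3 : ‖y - x‖ * ‖z - x‖ ≤ R ^ 2 := by
    rw [sq]; exact mul_le_mul h1 h2 (norm_nonneg _) hR.le
  exact mul_le_mul h3 hzd (norm_nonneg _) (by positivity)

/-- The dichotomy, with `dir` for the radial projection. -/
theorem dimH_eq_zero_or_subset_line (A : Set Plane) (hA : MeasurableSet A) (hdim : 0 < dimH A) :
    dimH {x | dimH (dir x '' (A \ {x})) < dimH A / 2} = 0 ∨
    ∃ a v : Plane, v ≠ 0 ∧ {x | dimH (dir x '' (A \ {x})) < dimH A / 2} ⊆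
      {p | ∃ t : ℝ, p = a + t • v} := by
  by_contra! hcon
  obtain ⟨h1, h2⟩ := hcon
  have htop : dimH A ≠ ∞ := Real.dimH_ne_top A
  have ha0 : 0 < dimH A / 2 := ENNReal.half_pos hdim.ne'
  have halt : dimH A / 2 < dimH A := ENNReal.half_lt_self hdim.ne' htop
  -- exhaust the exceptional set by thresholds `w n` strictly below `dimH A / 2`
  obtain ⟨w, -, hw, hwlim⟩ := exists_seq_strictMono_tendsto' ha0
  have hE : {x | dimH (dir x '' (A \ {x})) < dimH A / 2} =
      ⋃ n, {x | dimH (dir x '' (A \ {x})) < w n} := by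
    ext x
    simp only [mem_ofPred_eq, mem_iUnion]
    constructor
    · intro hx
      exact (hwlim.eventually_const_lt hx).exists
    · rintro ⟨n, hn⟩
      exact hn.trans (hw n).2
  have h3 : ∃ n, dimH {x | dimH (dir x '' (A \ {x})) < w n} ≠ 0 := by
    by_contra! h
    rw [hE, dimH_iUnion] at h1
    exact h1 (by simp [h])
  obtain ⟨n, hn⟩ := h3
  have hwn := hw n
  have hwtop : w n ≠ ∞ := hwn.2.ne_top
  have h2w : 2 * w n < dimH A := by
    have := ENNReal.mul_lt_mul_right (a := 2) two_ne_zero ENNReal.ofNat_ne_top hwn.2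
    rwa [ENNReal.mul_div_cancel two_ne_zero ENNReal.ofNat_ne_top] at this
  -- an exponent `s` with `2 * w n < s` for the null-line case and `dimH A / 2 < s` for the other one
  obtain ⟨s', hs', hs'A⟩ := exists_between (max_lt h2w halt)
  have hs'top := hs'A.ne_top
  have hs'a : dimH A / 2 < s' := (le_max_right _ _).trans_lt hs'
  have hs'w : 2 * w n < s' := (le_max_left _ _).trans_lt hs'
  have hs : 0 < s'.toReal := ENNReal.toReal_pos (ha0.trans hs'a).ne' hs'top
  have hofs : ENNReal.ofReal s'.toReal = s' := ENNReal.ofReal_toReal hs'top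
  have ht : 0 < (w n).toReal := ENNReal.toReal_pos hwn.1.ne' hwtop
  have hts : 2 * (w n).toReal < s'.toReal := by
    have := (ENNReal.toReal_lt_toReal (ENNReal.mul_ne_top ENNReal.ofNat_ne_top hwtop) hs'top).2 hs'w
    simpa using this
  obtain ⟨K, hKA, hK, μ, hprob, hμK, C, hC, hμ⟩ := exists_frostman hA hs (hofs.symm ▸ hs'A)
  by_cases hline : ∀ x y, x ≠ y → μ (K ∩ {z | det x y z = 0}) = 0
  · have := dimH_exceptional_eq_zero hs hKA hK hμK hC hμ hline ht hts
    rw [ENNReal.ofReal_toReal hwtop] at this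
    exact hn this
  · push Not at hline
    obtain ⟨x₀, y₀, hne, hpos⟩ := hline
    refine h2 x₀ (y₀ - x₀) (sub_ne_zero.2 hne.symm) fun x hx => ?_
    exact line_case hs hKA hK hC hμ hne hpos (hofs.symm ▸ (lt_trans hx hs'a))

end Orponen

/-- Orponen: if `A ⊆ ℝ²` is a Borel set with `dim A > 0`, then the set of
points `x` for which the radial projection `π_x(A \ {x})`,
`π_x(y) = (y-x)/|y-x|`, has Hausdorff dimension `< (dim A)/2`, either has
Hausdorff dimension `0` or is contained in an affine line. -/
theorem orponen_radial_exceptional_set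
    (A : Set (EuclideanSpace ℝ (Fin 2))) (hA : MeasurableSet A)
    (hdim : 0 < dimH A) :
    dimH {x : EuclideanSpace ℝ (Fin 2) |
        dimH ((fun y => ‖y - x‖⁻¹ • (y - x)) '' (A \ {x})) < dimH A / 2} = 0 ∨
    ∃ a v : EuclideanSpace ℝ (Fin 2), v ≠ 0 ∧
      {x : EuclideanSpace ℝ (Fin 2) |
          dimH ((fun y => ‖y - x‖⁻¹ • (y - x)) '' (A \ {x})) < dimH A / 2}
        ⊆ {p | ∃ t : ℝ, p = a + t • v} := by
  exact Orponen.dimH_eq_zero_or_subset_line A hA hdim
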